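/- Let G be a quasi 5-connected graph such that d_G(x) + d_G(y) ≥ 9 for every pair of vertices x, y at distance one or two. Then G contains a quasi 5-contractible edge. -/

import Mathlib

/-!
Suppose that no edge is contractible. Contracting `xy` can destroy quasi 5-connectedness only in
two ways: some vertex of degree four is adjacent to both `x` and `y`, or `x` and `y` lie in a common
*nontrivial `5`-cut*, a separating set of five vertices with at least two vertices on each side
(`contract_ok`). The degree condition makes vertices of degree four pairwise at distance at least
three. These two facts are collected in `Critical`, and everything else is a study of pairs
of crossing nontrivial `5`-cuts. Two crossing partitions `A, T, A'` and `B, S, B'` divide the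
vertices into nine cells, and the corner `A ∩ B` is separated from the rest by
`(T ∩ B) ∪ (T ∩ S) ∪ (A ∩ S)`. A separating set of at most four vertices isolates a vertex of degree
four (`small_cut`), so either the corner is empty, or its boundary has five vertices, or such a
vertex exists; counting the nine cells then restricts the crossing.

*No vertex of degree four.* A smallest side of a nontrivial `5`-cut has exactly two vertices
(`NoFour.exists_two`). Let `{z, w}` be such a side, of the cut `T`. The cuts through the edges between
`{z, w}` and `T` either contain `z` and `w` and halve the rest of `T` (`TypeTwo`), or separate one of
`z`, `w` from a single vertex of `T` (`TypeOne`). It follows that `z` and `w` are adjacent, that each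
misses exactly one vertex of `T`, and that there are type-two cuts at both missed vertices
(`TwoFrag.missing`). Two type-two cuts leave two adjacency patterns on `T` (`TwoFrag.two_types`),
and both are refuted by crossing with a type-one cut (`Missing.false_one`, `Missing.false_two`).

*A vertex `v` of degree four.* A nontrivial `5`-cut through an edge at `v` has a side with only one
neighbour of `v`, and every cut through that neighbour and `v` swallows the side, which therefore
has just two vertices (`Critical.single_nbr`). Doing this twice produces two crossing cuts with the
precise shape `Config` (`Critical.config`). If `v` had a neighbour among the outer vertices of this
shape, the graph would have nine vertices (`Config.nine`). Otherwise a cut through a hypothetical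
edge from `z` to an outer vertex `r₁` forces another vertex of degree four next to `r₁` and `r₂`
(`Config.side_pair`), and two such cuts contradict each other (`Config.false`). So `z` has no outer
neighbours and is a vertex of degree four adjacent to `v`, which is impossible (`Critical.no_four`).
-/

open SimpleGraph Set

variable {V : Type*}

/-- `G` is `k`-connected: more than `k` vertices and removing fewer than `k`
vertices leaves a connected graph. -/
def IsKConnected (k : ℕ) [Fintype V] (G : SimpleGraph V) : Prop :=
  k + 1 ≤ Fintype.card V ∧
    ∀ S : Set V, S.ncard < k → (G.induce Sᶜ).Connected

/-- Contraction of the edge `xy`: identify `y` with `x`, simplifying multiple edges. -/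
def contractE [DecidableEq V] (G : SimpleGraph V) (x y : V) :
    SimpleGraph {v : V // v ≠ y} :=
  SimpleGraph.fromRel (fun a b =>
    G.Adj a.1 b.1 ∨ (a.1 = x ∧ G.Adj y b.1) ∨ (b.1 = x ∧ G.Adj y a.1))

/-- The (outer) neighborhood of a vertex set `A`. -/
def gBoundary (G : SimpleGraph V) (A : Set V) : Set V :=
  {v | v ∉ A ∧ ∃ a ∈ A, G.Adj v a}

/-- `S` separates `G`: the rest of the graph splits into two nonempty parts
with no edges between them. -/
def Separates (G : SimpleGraph V) (S : Set V) : Prop :=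
  ∃ A B : Set V, A.Nonempty ∧ B.Nonempty ∧ Disjoint A B ∧ A ∪ B = Sᶜ ∧
    ∀ a ∈ A, ∀ b ∈ B, ¬ G.Adj a b

/-- `T` is a nontrivial 4-cut: `|T| = 4` and `G - T` splits into two parts,
each of size at least 2, with no edges between them. -/
def IsNontrivialFourCut (G : SimpleGraph V) (T : Set V) : Prop :=
  T.ncard = 4 ∧ ∃ A B : Set V, 2 ≤ A.ncard ∧ 2 ≤ B.ncard ∧ Disjoint A B ∧
    A ∪ B = Tᶜ ∧ ∀ a ∈ A, ∀ b ∈ B, ¬ G.Adj a b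

/-- `G` is quasi 5-connected: 4-connected without a nontrivial 4-cut. -/
def QuasiFiveConnected [Fintype V] (G : SimpleGraph V) : Prop :=
  IsKConnected 4 G ∧ ∀ T : Set V, ¬ IsNontrivialFourCut G T

/-- `G` is contraction critical quasi 5-connected. -/
def ContractionCriticalQuasiFive [Fintype V] [DecidableEq V] (G : SimpleGraph V) : Prop :=
  QuasiFiveConnected G ∧
    ∀ x y : V, G.Adj x y → ¬ QuasiFiveConnected (contractE G x y)

/-- `A` is a fragment of `G`: both `A` and its "far side" are nonempty and the
neighborhood of `A` is a smallest separating set. -/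
def IsFragment (G : SimpleGraph V) (A : Set V) : Prop :=
  A.Nonempty ∧ (Aᶜ \ gBoundary G A).Nonempty ∧
    ∀ S : Set V, Separates G S → (gBoundary G A).ncard ≤ S.ncard

/-- A nontrivial fragment: both sides have at least two vertices. -/
def IsNontrivialFragment (G : SimpleGraph V) (A : Set V) : Prop :=
  IsFragment G A ∧ 2 ≤ A.ncard ∧ 2 ≤ (Aᶜ \ gBoundary G A).ncard

/-- Degree sum at least 9 for every pair of vertices at distance one or two. -/
def DegSumNine (G : SimpleGraph V) : Prop :=
  ∀ u v : V, (G.dist u v = 1 ∨ G.dist u v = 2) →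
    9 ≤ (G.neighborSet u).ncard + (G.neighborSet v).ncard

set_option linter.unusedSectionVars false

/-! ### Partitions with a separating set -/

/-- The vertex set is split into `X`, `W`, `Y` with no edge between `X` and `Y`;
the sets `X` and `Y` may be empty. -/
structure VPart (G : SimpleGraph V) (X W Y : Finset V) : Prop where
  cov : ∀ v, v ∈ X ∨ v ∈ W ∨ v ∈ Y
  xw : ∀ v, v ∈ X → v ∉ W
  xy : ∀ v, v ∈ X → v ∉ Y
  wy : ∀ v, v ∈ W → v ∉ Y
  na : ∀ x ∈ X, ∀ y ∈ Y, ¬ G.Adj x y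

/-- `W` is a nontrivial `5`-cut, with sides `X` and `Y`. -/
structure FSep (G : SimpleGraph V) (X W Y : Finset V) : Prop extends VPart G X W Y where
  cx : 2 ≤ X.card
  cy : 2 ≤ Y.card
  cw : W.card = 5

open scoped Classical in
/-- The neighbourhood of a vertex, as a finset. -/
noncomputable def nb [Fintype V] (G : SimpleGraph V) (v : V) : Finset V :=
  Finset.univ.filter (fun u => G.Adj v u)

lemma mem_nb [Fintype V] {G : SimpleGraph V} {v u : V} : u ∈ nb G v ↔ G.Adj v u := by
  simp [nb]

lemma ncard_nb [Fintype V] (G : SimpleGraph V) (v : V) :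
    (G.neighborSet v).ncard = (nb G v).card := by
  rw [← Set.ncard_coe_finset]; congr 1; ext u; simp [mem_nb]

lemma VPart.symm {G : SimpleGraph V} {X W Y : Finset V} (P : VPart G X W Y) : VPart G Y W X :=
  ⟨fun v => by have := P.cov v; tauto, fun v h h' => P.wy v h' h, fun v h h' => P.xy v h' h,
    fun v h h' => P.xw v h' h, fun x hx y hy h => P.na y hy x hx h.symm⟩

lemma FSep.symm {G : SimpleGraph V} {X W Y : Finset V} (P : FSep G X W Y) : FSep G Y W X :=
  ⟨P.toVPart.symm, P.cy, P.cx, P.cw⟩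

lemma VPart.card [DecidableEq V] {G : SimpleGraph V} {X W Y : Finset V} (P : VPart G X W Y)
    (M : Finset V) : M.card = (M ∩ X).card + (M ∩ W).card + (M ∩ Y).card := by
  have h1 : M = (M ∩ X ∪ M ∩ W) ∪ M ∩ Y := by
    ext v; have := P.cov v; simp only [Finset.mem_union, Finset.mem_inter]; tauto
  conv_lhs => rw [h1]
  rw [Finset.card_union_of_disjoint, Finset.card_union_of_disjoint]
  · rw [Finset.disjoint_left]; intro v h h'
    simp only [Finset.mem_inter] at h h'; exact P.xw v h.2 h'.2
  · rw [Finset.disjoint_left]; intro v h h'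
    simp only [Finset.mem_union, Finset.mem_inter] at h h'
    rcases h with h | h
    · exact P.xy v h.2 h'.2
    · exact P.wy v h.2 (h' |>.right)

/-- The corner `A ∩ B` of two crossing partitions, together with the set that cuts it off. -/
lemma VPart.corner [DecidableEq V] {G : SimpleGraph V} {A T A' B S B' : Finset V}
    (P : VPart G A T A') (Q : VPart G B S B') :
    VPart G (A ∩ B) (T ∩ B ∪ T ∩ S ∪ A ∩ S) (A' ∪ B') := by
  refine ⟨fun v => ?_, fun v h => ?_, fun v h => ?_, fun v h => ?_, fun x hx y hy h => ?_⟩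
  · have := P.cov v; have := Q.cov v
    simp only [Finset.mem_union, Finset.mem_inter]; tauto
  · have := P.xw v; have := Q.xw v
    simp only [Finset.mem_union, Finset.mem_inter] at h ⊢; tauto
  · have := P.xy v; have := Q.xy v
    simp only [Finset.mem_union, Finset.mem_inter] at h ⊢; tauto
  · have := P.wy v; have := Q.wy v; have := P.xy v; have := Q.xy v
    simp only [Finset.mem_union, Finset.mem_inter] at h ⊢; tauto
  · simp only [Finset.mem_union, Finset.mem_inter] at hx hy
    rcases hy with hy | hy
    · exact P.na x hx.1 y hy h
    · exact Q.na x hx.2 y hy h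

/-- The set cutting off a corner is a disjoint union of three cells. -/
lemma VPart.corner_card [DecidableEq V] {G : SimpleGraph V} {A T A' B S B' : Finset V}
    (P : VPart G A T A') (Q : VPart G B S B') :
    (T ∩ B ∪ T ∩ S ∪ A ∩ S).card = (T ∩ B).card + (T ∩ S).card + (A ∩ S).card := by
  rw [Finset.card_union_of_disjoint, Finset.card_union_of_disjoint]
  · rw [Finset.disjoint_left]; intro v h h'
    simp only [Finset.mem_inter] at h h'; exact Q.xw v h.2 h'.2
  · rw [Finset.disjoint_left]; intro v h h'
    simp only [Finset.mem_union, Finset.mem_inter] at h h'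
    rcases h with h | h <;> exact P.xw v h'.1 h.1

/-- Vertices of the cut without neighbours in `X` may be moved to the other side. -/
lemma VPart.shrink [DecidableEq V] {G : SimpleGraph V} {X W Y : Finset V}
    (P : VPart G X W Y) (U : Finset V) (hU : U ⊆ W) (h : ∀ u ∈ U, ∀ x ∈ X, ¬ G.Adj u x) :
    VPart G X (W \ U) (Y ∪ U) := by
  refine ⟨fun v => ?_, fun v h => ?_, fun v h => ?_, fun v h => ?_, fun x hx y hy h' => ?_⟩
  · have := P.cov v; simp only [Finset.mem_union, Finset.mem_sdiff]; tauto
  · have := P.xw v h; simp only [Finset.mem_sdiff]; tauto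
  · have := P.xw v h; have := P.xy v h; have := @hU v
    simp only [Finset.mem_union]; tauto
  · have := P.wy v; simp only [Finset.mem_union, Finset.mem_sdiff] at h ⊢; tauto
  · rcases Finset.mem_union.1 hy with hy | hy
    · exact P.na x hx y hy h'
    · exact h y hy x hx h'.symm

/-- A vertex of `X` may be moved into the cut. -/
lemma VPart.move [DecidableEq V] {G : SimpleGraph V} {X W Y : Finset V}
    (P : VPart G X W Y) (r : V) (hr : r ∈ X) : VPart G (X.erase r) (insert r W) Y := by
  refine ⟨fun v => ?_, fun v h => ?_, fun v h => ?_, fun v h => ?_, fun x hx y hy h' => ?_⟩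
  · have := P.cov v; simp only [Finset.mem_insert, Finset.mem_erase]; tauto
  · have := P.xw v; simp only [Finset.mem_insert, Finset.mem_erase] at h ⊢; tauto
  · have := P.xy v; simp only [Finset.mem_erase] at h ⊢; tauto
  · rcases Finset.mem_insert.1 h with rfl | h
    · exact P.xy _ hr
    · exact P.wy v h
  · exact P.na x (Finset.mem_of_mem_erase hx) y hy h'

lemma not_connected_of_part [Fintype V] {G : SimpleGraph V} {X W Y : Finset V}
    (P : VPart G X W Y) (hX : X.Nonempty) (hY : Y.Nonempty) :
    ¬ (G.induce ((W : Set V)ᶜ)).Connected := by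
  intro hc
  obtain ⟨x, hx⟩ := hX
  obtain ⟨y, hy⟩ := hY
  have hxW : x ∈ (W : Set V)ᶜ := by simpa using P.xw x hx
  have hyW : y ∈ (W : Set V)ᶜ := by simpa using fun h => P.wy y h hy
  have key : ∀ (a b : ((W : Set V)ᶜ : Set V)), (G.induce ((W : Set V)ᶜ)).Walk a b →
      a.1 ∈ X → b.1 ∈ X := by
    intro a b p
    induction p with
    | nil => exact id
    | @cons a c d hac _ ih =>
      intro ha
      apply ih
      have h1 : G.Adj a.1 c.1 := by simpa using hac
      have h2 : c.1 ∉ W := fun h => c.2 (Finset.mem_coe.2 h)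
      rcases P.cov c.1 with h | h | h
      · exact h
      · exact absurd h h2
      · exact absurd h1 (P.na _ ha _ h)
  obtain ⟨p⟩ := hc.preconnected ⟨x, hxW⟩ ⟨y, hyW⟩
  exact P.xy y (key _ _ p hx) hy

lemma exists_part_of_not_connected [Fintype V] [DecidableEq V] {G : SimpleGraph V} {W : Finset V}
    (hne : ∃ x, x ∉ W) (h : ¬ (G.induce ((W : Set V)ᶜ)).Connected) :
    ∃ X Y, VPart G X W Y ∧ X.Nonempty ∧ Y.Nonempty := by
  classical
  set H := G.induce ((W : Set V)ᶜ) with hH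
  have hne' : Nonempty ((W : Set V)ᶜ : Set V) := by
    obtain ⟨x, hx⟩ := hne; exact ⟨⟨x, by simpa using hx⟩⟩
  have h1 : ¬ H.Preconnected := fun h' => h ⟨h'⟩
  unfold SimpleGraph.Preconnected at h1
  push Not at h1
  obtain ⟨a, b, hab⟩ := h1
  refine ⟨Finset.univ.filter (fun v => ∃ hv : v ∈ (W : Set V)ᶜ, H.Reachable a ⟨v, hv⟩),
    Finset.univ.filter (fun v => ∃ hv : v ∈ (W : Set V)ᶜ, ¬ H.Reachable a ⟨v, hv⟩),
    ⟨?_, ?_, ?_, ?_, ?_⟩, ⟨a.1, ?_⟩, ⟨b.1, ?_⟩⟩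
  · intro v
    by_cases hv : v ∈ W
    · exact Or.inr (Or.inl hv)
    · have hv' : v ∈ (W : Set V)ᶜ := by simpa using hv
      by_cases hr : H.Reachable a ⟨v, hv'⟩
      · left; simpa using ⟨hv, hr⟩
      · right; right; simpa using ⟨hv, hr⟩
  · intro v hv; simp at hv; exact hv.1
  · intro v hv hv'; simp at hv hv'; exact hv'.2 hv.2
  · intro v hv hv'; simp at hv'; exact hv'.1 hv
  · intro x hx y hy hxy
    simp only [Finset.mem_filter, Finset.mem_univ, true_and] at hx hy
    obtain ⟨hx1, hx2⟩ := hx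
    obtain ⟨hy1, hy2⟩ := hy
    apply hy2
    refine hx2.trans (SimpleGraph.Adj.reachable ?_)
    simpa [hH] using hxy
  · simp only [Finset.mem_filter, Finset.mem_univ, true_and]
    exact ⟨a.2, SimpleGraph.Reachable.refl a⟩
  · simp only [Finset.mem_filter, Finset.mem_univ, true_and]
    exact ⟨b.2, hab⟩

/-! ### Small cuts and contraction of an edge -/

section Lift
variable [Fintype V] [DecidableEq V] {G : SimpleGraph V}

/-- A separating set of a quasi 5-connected graph has at least four vertices. -/
lemma four_le (hG : QuasiFiveConnected G) {X W Y : Finset V} (P : VPart G X W Y)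
    (hX : X.Nonempty) (hY : Y.Nonempty) : 4 ≤ W.card := by
  by_contra h
  refine not_connected_of_part P hX hY (hG.1.2 _ ?_)
  rw [Set.ncard_coe_finset]; omega

lemma isNontrivialFourCut_of_part {V : Type*} {G : SimpleGraph V} {X W Y : Finset V}
    (P : VPart G X W Y)
    (hX : 2 ≤ X.card) (hY : 2 ≤ Y.card) (hW : W.card = 4) : IsNontrivialFourCut G (W : Set V) := by
  refine ⟨by rwa [Set.ncard_coe_finset], X, Y, by rwa [Set.ncard_coe_finset],
    by rwa [Set.ncard_coe_finset], ?_, ?_, fun a ha b hb => P.na a ha b hb⟩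
  · rw [Set.disjoint_left]; exact fun v h => P.xy v h
  · ext v
    have := P.cov v; have := P.xw v; have := P.wy v
    simp only [Set.mem_union, Finset.mem_coe, Set.mem_compl_iff]; tauto

lemma exists_part_of_isNontrivialFourCut {T : Set V} (h : IsNontrivialFourCut G T) :
    ∃ X W Y : Finset V, VPart G X W Y ∧ 2 ≤ X.card ∧ 2 ≤ Y.card ∧ W.card = 4 := by
  obtain ⟨hT, A, B, hA, hB, hd, hu, hn⟩ := h
  lift T to Finset V using Set.toFinite T
  lift A to Finset V using Set.toFinite A
  lift B to Finset V using Set.toFinite B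
  rw [Set.ncard_coe_finset] at hT hA hB
  have hu' : ∀ v, (v ∈ A ∨ v ∈ B) ↔ v ∉ T := fun v => by
    have := Set.ext_iff.1 hu v
    simpa using this
  refine ⟨A, T, B, ⟨fun v => ?_, fun v => ?_, fun v h h' => ?_, fun v => ?_, hn⟩, hA, hB, hT⟩
  · have := hu' v; tauto
  · have := hu' v; tauto
  · exact Set.disjoint_left.1 hd h h'
  · have := hu' v; tauto

/-- A cut with at most four vertices that isolates the single vertex `d` is its neighbourhood. -/
lemma single_cut (hG : QuasiFiveConnected G) {d : V} {W Y : Finset V} (P : VPart G {d} W Y)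
    (hY : Y.Nonempty) (hW : W.card ≤ 4) : W.card = 4 ∧ nb G d = W := by
  classical
  have h4 := four_le hG P ⟨d, by simp⟩ hY
  refine ⟨by omega, ?_⟩
  have h5 := four_le hG (P.shrink (W.filter (fun u => ¬ G.Adj d u)) (Finset.filter_subset _ _)
    (fun u hu x hx => by
      rw [Finset.mem_singleton] at hx; subst hx
      rw [Finset.mem_filter] at hu
      exact fun h => hu.2 h.symm)) ⟨d, by simp⟩ (hY.mono Finset.subset_union_left)
  have h6 := Finset.eq_of_subset_of_card_le
    (Finset.sdiff_subset (s := W) (t := W.filter (fun u => ¬ G.Adj d u))) (by omega)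
  ext u
  rw [mem_nb]
  constructor
  · intro h
    rcases P.cov u with h' | h' | h'
    · rw [Finset.mem_singleton] at h'; subst h'; exact absurd h (G.loopless.irrefl _)
    · exact h'
    · exact absurd h (P.na d (by simp) u h')
  · intro h
    rw [← h6] at h
    simp only [Finset.mem_sdiff, Finset.mem_filter, not_and, not_not] at h
    exact h.2 h.1

/-- In a quasi 5-connected graph a cut with at most four vertices isolates a vertex of
degree four, unless the other side is a single vertex. -/
lemma small_cut (hG : QuasiFiveConnected G) {X W Y : Finset V} (P : VPart G X W Y)
    (hX : X.Nonempty) (hY : 2 ≤ Y.card) (hW : W.card ≤ 4) :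
    ∃ d, X = {d} ∧ W.card = 4 ∧ nb G d = W := by
  have hY' : Y.Nonempty := Finset.card_pos.1 (by omega)
  have h4 := four_le hG P hX hY'
  have h1 : X.card = 1 := by
    by_contra h
    have := Finset.card_pos.2 hX
    exact hG.2 _ (isNontrivialFourCut_of_part P (by omega) hY (by omega))
  obtain ⟨d, rfl⟩ := Finset.card_eq_one.1 h1
  exact ⟨d, rfl, single_cut hG P hY' hW⟩

/-- A partition of `G/xy`, in which `x` is the merged vertex, lifts to `G`: the vertex `y` joins
the part containing `x`. -/
lemma lift_part {x y : V} {X W Y : Finset {v : V // v ≠ y}}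
    (hxy : G.Adj x y) (P : VPart (contractE G x y) X W Y) :
    ((⟨x, hxy.ne⟩ : {v : V // v ≠ y}) ∈ W →
      VPart G (X.map ⟨_, Subtype.val_injective⟩) (insert y (W.map ⟨_, Subtype.val_injective⟩))
        (Y.map ⟨_, Subtype.val_injective⟩)) ∧
    ((⟨x, hxy.ne⟩ : {v : V // v ≠ y}) ∈ X →
      VPart G (insert y (X.map ⟨_, Subtype.val_injective⟩)) (W.map ⟨_, Subtype.val_injective⟩)
        (Y.map ⟨_, Subtype.val_injective⟩)) := by
  have hm : ∀ (Z : Finset {v : V // v ≠ y}) (v : V),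
      v ∈ Z.map ⟨_, Subtype.val_injective⟩ ↔ ∃ h : v ≠ y, (⟨v, h⟩ : {v : V // v ≠ y}) ∈ Z := by
    intro Z v; simp
  have hcov : ∀ v, v = y ∨ v ∈ X.map ⟨_, Subtype.val_injective⟩ ∨
      v ∈ W.map ⟨_, Subtype.val_injective⟩ ∨ v ∈ Y.map ⟨_, Subtype.val_injective⟩ := by
    intro v
    by_cases h : v = y
    · exact Or.inl h
    · right; simp only [hm]; rcases P.cov ⟨v, h⟩ with h' | h' | h' <;> tauto
  have hna : ∀ a ∈ X.map ⟨_, Subtype.val_injective⟩, ∀ b ∈ Y.map ⟨_, Subtype.val_injective⟩,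
      ¬ G.Adj a b := by
    intro a ha b hb hab
    rw [hm] at ha hb
    obtain ⟨ha1, ha2⟩ := ha
    obtain ⟨hb1, hb2⟩ := hb
    refine P.na _ ha2 _ hb2 ?_
    simp only [contractE, SimpleGraph.fromRel_adj]
    exact ⟨fun h => hab.ne (congrArg Subtype.val h), Or.inl (Or.inl hab)⟩
  constructor
  · intro hxW
    refine ⟨fun v => ?_, fun v h => ?_, fun v h => ?_, fun v h => ?_, hna⟩
    · have := hcov v; simp only [Finset.mem_insert]; tauto
    · simp only [Finset.mem_insert, hm] at h ⊢
      rintro (rfl | ⟨h1, h2⟩)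
      · exact h.1 rfl
      · exact P.xw _ h.2 h2
    · simp only [hm] at h ⊢
      rintro ⟨h1, h2⟩; exact P.xy _ h.2 h2
    · simp only [Finset.mem_insert, hm] at h ⊢
      rintro ⟨h1, h2⟩
      rcases h with rfl | ⟨h3, h4⟩
      · exact h1 rfl
      · exact P.wy _ h4 h2
  · intro hxX
    refine ⟨fun v => ?_, fun v h => ?_, fun v h => ?_, fun v h => ?_, fun a ha b hb hab => ?_⟩
    · have := hcov v; simp only [Finset.mem_insert]; tauto
    · simp only [Finset.mem_insert, hm] at h ⊢
      rintro ⟨h1, h2⟩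
      rcases h with rfl | ⟨h3, h4⟩
      · exact h1 rfl
      · exact P.xw _ h4 h2
    · simp only [Finset.mem_insert, hm] at h ⊢
      rintro ⟨h1, h2⟩
      rcases h with rfl | ⟨h3, h4⟩
      · exact h1 rfl
      · exact P.xy _ h4 h2
    · simp only [hm] at h ⊢
      rintro ⟨h1, h2⟩; exact P.wy _ h.2 h2
    · rcases Finset.mem_insert.1 ha with rfl | ha
      · rw [hm] at hb
        obtain ⟨hb1, hb2⟩ := hb
        refine P.na _ hxX _ hb2 ?_
        simp only [contractE, SimpleGraph.fromRel_adj]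
        exact ⟨fun h => P.xy _ hxX (h ▸ hb2), Or.inl (Or.inr (Or.inl ⟨trivial, hab⟩))⟩
      · exact hna a ha b hb hab

/-- An edge is contractible as soon as no nontrivial `5`-cut contains both ends and no vertex
of degree four is adjacent to both ends. -/
lemma contract_ok (hG : QuasiFiveConnected G) (h6 : 6 ≤ Fintype.card V) {x y : V}
    (hxy : G.Adj x y) (hd : ∀ d, (nb G d).card = 4 → x ∈ nb G d → y ∉ nb G d)
    (hs : ∀ X W Y, FSep G X W Y → x ∈ W → y ∉ W) : QuasiFiveConnected (contractE G x y) := by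
  have hc : ∀ Z : Finset {v : V // v ≠ y},
      (Z.map ⟨_, Subtype.val_injective⟩ : Finset V).card = Z.card := fun Z => Finset.card_map _
  have hy : ∀ Z : Finset {v : V // v ≠ y}, y ∉ Z.map ⟨_, Subtype.val_injective⟩ := by
    intro Z; simp
  have hi : ∀ Z : Finset {v : V // v ≠ y},
      (insert y (Z.map ⟨_, Subtype.val_injective⟩) : Finset V).card = Z.card + 1 := by
    intro Z; rw [Finset.card_insert_of_notMem (hy Z), hc]
  have hxm : ∀ Z : Finset {v : V // v ≠ y}, (⟨x, hxy.ne⟩ : {v : V // v ≠ y}) ∈ Z →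
      x ∈ Z.map ⟨_, Subtype.val_injective⟩ := by
    intro Z h; simpa using ⟨hxy.ne, h⟩
  have hV : Fintype.card {v : V // v ≠ y} = Fintype.card V - 1 := by
    rw [Fintype.card_subtype_compl, Fintype.card_subtype_eq]
  -- cuts of the contraction with fewer than four vertices
  have key1 : ∀ X W Y : Finset {v : V // v ≠ y}, VPart (contractE G x y) X W Y → X.Nonempty →
      Y.Nonempty → 4 ≤ W.card := by
    intro X W Y P hX hY
    have hX' : (X.map ⟨_, Subtype.val_injective⟩ : Finset V).Nonempty := by simpa using hX
    have hY' : (Y.map ⟨_, Subtype.val_injective⟩ : Finset V).Nonempty := by simpa using hY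
    rcases P.cov ⟨x, hxy.ne⟩ with h | h | h
    · have := four_le hG ((lift_part hxy P).2 h) (by simp) hY'
      rwa [hc] at this
    · by_contra hlt
      have P' := (lift_part hxy P).1 h
      have hcc := hi W
      have hxW := Finset.mem_insert_of_mem (b := y) (hxm W h)
      have hyW := Finset.mem_insert_self y (W.map ⟨_, Subtype.val_injective⟩)
      have aux : ∀ {X' Y' : Finset V}, VPart G X' (insert y (W.map ⟨_, Subtype.val_injective⟩)) Y' →
          X'.Nonempty → Y'.Nonempty → 2 ≤ X'.card := by
        intro X' Y' Q h1 h2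
        by_contra h3
        have := Finset.card_pos.2 h1
        obtain ⟨d, rfl⟩ := Finset.card_eq_one.1 (by omega : X'.card = 1)
        obtain ⟨h4, h5⟩ := single_cut hG Q h2 (by omega)
        exact hd d (by rw [h5, h4]) (h5 ▸ hxW) (h5 ▸ hyW)
      have h4 := four_le hG P' hX' hY'
      exact hG.2 _ (isNontrivialFourCut_of_part P' (aux P' hX' hY') (aux P'.symm hY' hX')
        (by omega))
    · have := four_le hG ((lift_part hxy P.symm).2 h) (by simp) hX'
      rwa [hc] at this
  refine ⟨⟨by omega, fun S hS => ?_⟩, fun T hT => ?_⟩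
  · lift S to Finset {v : V // v ≠ y} using Set.toFinite S
    rw [Set.ncard_coe_finset] at hS
    by_contra hcon
    obtain ⟨X, Y, P, hX, hY⟩ := exists_part_of_not_connected (by
      by_contra hall
      push Not at hall
      have : S = Finset.univ := by ext v; simp [hall v]
      rw [this, Finset.card_univ] at hS
      omega) hcon
    have := key1 X S Y P hX hY
    omega
  · obtain ⟨X, W, Y, P, hX, hY, hW⟩ := exists_part_of_isNontrivialFourCut hT
    rcases P.cov ⟨x, hxy.ne⟩ with h | h | h
    · exact hG.2 _ (isNontrivialFourCut_of_part ((lift_part hxy P).2 h) (by rw [hi]; omega)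
        (by rwa [hc]) (by rwa [hc]))
    · exact hs _ _ _ ⟨(lift_part hxy P).1 h, by rwa [hc], by rwa [hc], by rw [hi]; omega⟩
        (Finset.mem_insert_of_mem (hxm W h)) (Finset.mem_insert_self _ _)
    · exact hG.2 _ (isNontrivialFourCut_of_part ((lift_part hxy P.symm).2 h) (by rw [hi]; omega)
        (by rwa [hc]) (by rwa [hc]))
end Lift

/-! ### Critical graphs and crossing cuts -/

section Setup
variable [Fintype V] [DecidableEq V] {G : SimpleGraph V}

/-- The consequences of the degree condition and of the absence of a contractible edge: vertices
of degree four are pairwise at distance at least three (`far`), and the two ends of an edge lie in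
a common nontrivial `5`-cut unless they are both adjacent to a vertex of degree four (`edge`). -/
structure Critical (G : SimpleGraph V) : Prop where
  quasi : QuasiFiveConnected G
  deg : ∀ v, 4 ≤ (nb G v).card
  far : ∀ u v, (nb G u).card = 4 → (nb G v).card = 4 → u ≠ v →
    ¬ G.Adj u v ∧ ∀ w, G.Adj u w → ¬ G.Adj v w
  edge : ∀ x y, G.Adj x y → (∀ d, (nb G d).card = 4 → x ∈ nb G d → y ∉ nb G d) →
    ∃ X W Y, FSep G X W Y ∧ x ∈ W ∧ y ∈ W

lemma part_nb (v : V) : VPart G {v} (nb G v) (Finset.univ \ (insert v (nb G v))) := by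
  refine ⟨fun u => ?_, fun u => ?_, fun u => ?_, fun u => ?_, fun u hu w hw h => ?_⟩ <;>
    simp only [Finset.mem_sdiff, Finset.mem_univ, true_and, Finset.mem_insert,
      Finset.mem_singleton, mem_nb] at *
  · tauto
  · rintro rfl; exact G.loopless.irrefl _
  · tauto
  · tauto
  · subst hu; tauto

lemma card_nb_ge (hG : QuasiFiveConnected G) (v : V) : 4 ≤ (nb G v).card := by
  by_cases h : (Finset.univ \ (insert v (nb G v))).Nonempty
  · exact four_le hG (part_nb v) ⟨v, by simp⟩ h
  · rw [Finset.not_nonempty_iff_eq_empty] at h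
    have h1 := Finset.card_sdiff_add_card_eq_card (Finset.subset_univ (insert v (nb G v)))
    have h2 := Finset.card_insert_le v (nb G v)
    have h3 := hG.1.1
    rw [h, Finset.card_univ, Finset.card_empty] at h1
    omega

lemma critical_of_not (hG : QuasiFiveConnected G) (hdeg : DegSumNine G)
    (hno : ¬ ∃ x y : V, G.Adj x y ∧ QuasiFiveConnected (contractE G x y)) : Critical G := by
  have hd1 : ∀ u v, G.Adj u v → 9 ≤ (nb G u).card + (nb G v).card := fun u v h => by
    rw [← ncard_nb, ← ncard_nb]
    exact hdeg u v (Or.inl (SimpleGraph.dist_eq_one_iff_adj.2 h))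
  have hd2 : ∀ u v w, u ≠ v → G.Adj u w → G.Adj v w → 9 ≤ (nb G u).card + (nb G v).card := by
    intro u v w hne h1 h2
    by_cases huv : G.Adj u v
    · exact hd1 u v huv
    rw [← ncard_nb, ← ncard_nb]
    refine hdeg u v (Or.inr ?_)
    have h3 : G.dist u v ≤ 2 := SimpleGraph.dist_le (.cons h1 (.cons h2.symm .nil))
    have h4 : G.dist u v ≠ 1 := fun h => huv (SimpleGraph.dist_eq_one_iff_adj.1 h)
    have h5 : G.Reachable u v := ⟨.cons h1 (.cons h2.symm .nil)⟩
    have h6 := h5.pos_dist_of_ne hne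
    omega
  refine ⟨hG, card_nb_ge hG, fun u v hu hv hne => ⟨fun h => ?_, fun w h1 h2 => ?_⟩,
    fun x y hxy hd => ?_⟩
  · have := hd1 u v h; omega
  · have := hd2 u v w hne h1 h2; omega
  · have h6 : 6 ≤ Fintype.card V := by
      have hle : ∀ v, (nb G v).card + 1 ≤ Fintype.card V := fun v => by
        rw [← Finset.card_insert_of_notMem (a := v) (s := nb G v)
          (by rw [mem_nb]; exact G.loopless.irrefl _)]
        exact Finset.card_le_univ _
      have := hd1 x y hxy
      have := hle x
      have := hle y
      omega
    by_contra hcon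
    refine hno ⟨x, y, hxy, contract_ok hG h6 hxy hd fun X W Y P hx hy => ?_⟩
    exact hcon ⟨X, W, Y, P, hx, hy⟩

/-- The nine cells of two crossing partitions. -/
lemma VPart.cross {A T A' B S B' : Finset V} (P : VPart G A T A') (Q : VPart G B S B') :
    (A.card = (A ∩ B).card + (A ∩ S).card + (A ∩ B').card ∧
     T.card = (T ∩ B).card + (T ∩ S).card + (T ∩ B').card ∧
     A'.card = (A' ∩ B).card + (A' ∩ S).card + (A' ∩ B').card) ∧
    (B.card = (A ∩ B).card + (T ∩ B).card + (A' ∩ B).card ∧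
     S.card = (A ∩ S).card + (T ∩ S).card + (A' ∩ S).card ∧
     B'.card = (A ∩ B').card + (T ∩ B').card + (A' ∩ B').card) := by
  refine ⟨⟨Q.card A, Q.card T, Q.card A'⟩, ?_, ?_, ?_⟩ <;>
    simp only [Finset.inter_comm A, Finset.inter_comm T, Finset.inter_comm A'] <;> apply P.card

end Setup

section NoFour
variable [Fintype V] [DecidableEq V] {G : SimpleGraph V}

/-- The situation without vertices of degree four: the only separating sets with fewer than five
vertices would leave at most one vertex on each side, and the two ends of every edge lie in a
common nontrivial `5`-cut. -/
structure NoFour (G : SimpleGraph V) : Prop where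
  five : ∀ X W Y, VPart G X W Y → X.Nonempty → 2 ≤ Y.card → 5 ≤ W.card
  edge : ∀ x y, G.Adj x y → ∃ X W Y, FSep G X W Y ∧ x ∈ W ∧ y ∈ W

lemma noFour_of_critical (h : Critical G) (hD : ∀ v, (nb G v).card ≠ 4) : NoFour G := by
  refine ⟨fun X W Y P hX hY => ?_, fun x y hxy => h.edge x y hxy fun d hd => absurd hd (hD d)⟩
  by_contra hlt
  obtain ⟨d, -, h1, h2⟩ := small_cut h.quasi P hX hY (by omega)
  exact hD d (by rw [h2, h1])

/-- Minimality of a `5`-cut: each of its vertices has a neighbour on the given side. -/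
lemma NoFour.full (h : NoFour G) {X W Y : Finset V} (P : VPart G X W Y) (hX : X.Nonempty)
    (hY : 2 ≤ Y.card) (hW : W.card = 5) {u : V} (hu : u ∈ W) : ∃ x ∈ X, G.Adj u x := by
  by_contra hcon
  push Not at hcon
  have P' := P.shrink {u} (by simpa using hu) (by simpa using hcon)
  have := h.five _ _ _ P' hX (hY.trans (Finset.card_le_card Finset.subset_union_left))
  rw [Finset.sdiff_singleton_eq_erase, Finset.card_erase_of_mem hu] at this
  omega

lemma FSep.full (h : NoFour G) {X W Y : Finset V} (P : FSep G X W Y) {u : V} (hu : u ∈ W) :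
    (∃ x ∈ X, G.Adj u x) ∧ ∃ y ∈ Y, G.Adj u y :=
  ⟨h.full P.toVPart (Finset.card_pos.1 (by have := P.cx; omega)) P.cy P.cw hu,
   h.full P.symm.toVPart (Finset.card_pos.1 (by have := P.cy; omega)) P.cx P.cw hu⟩

lemma card_union_left_ge {A B : Finset V} (h : 2 ≤ A.card) : 2 ≤ (A ∪ B).card :=
  h.trans (Finset.card_le_card Finset.subset_union_left)

/-- A corner of two crossing `5`-cuts is empty or is cut off by at least five vertices; the
opposite sides keep two vertices each, so `NoFour.five` applies. -/
lemma FSep.corner5 (h : NoFour G) {A T A' B S B' : Finset V} (P : FSep G A T A')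
    (Q : FSep G B S B') :
    ((A ∩ B).card = 0 ∨ 5 ≤ (T ∩ B).card + (T ∩ S).card + (A ∩ S).card) := by
  by_cases h0 : (A ∩ B).card = 0
  · exact Or.inl h0
  · right
    rw [← P.toVPart.corner_card Q.toVPart]
    exact h.five _ _ _ (P.toVPart.corner Q.toVPart) (Finset.card_pos.1 (by omega))
      (card_union_left_ge P.cy)

/-- If a corner is a single vertex and has a boundary of five vertices, it is adjacent
to its whole boundary. -/
lemma FSep.corner_full (h : NoFour G) {A T A' B S B' : Finset V} (P : FSep G A T A')
    (Q : FSep G B S B') {p : V} (hp : A ∩ B = {p})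
    (h5 : (T ∩ B).card + (T ∩ S).card + (A ∩ S).card = 5) :
    ∀ u ∈ T ∩ B ∪ T ∩ S ∪ A ∩ S, G.Adj p u := by
  intro u hu
  rw [← P.toVPart.corner_card Q.toVPart] at h5
  have P' := P.toVPart.corner Q.toVPart
  rw [hp] at P'
  obtain ⟨x, hx, hux⟩ := h.full P' ⟨p, by simp⟩ (card_union_left_ge P.cy) h5 hu
  rw [Finset.mem_singleton] at hx
  subst hx; exact hux.symm

/-- How a `5`-cut `S` crosses a side `A` of smallest size: at most two vertices of `A` lie in `S`
and each of the two parts of `A` has at most one vertex, with a boundary of exactly five vertices.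
A larger corner with five boundary vertices would be a smaller side. -/
lemma FSep.min_step (h : NoFour G) {A T A' B S B' : Finset V} (P : FSep G A T A')
    (hmin : ∀ B S B', FSep G B S B' → A.card ≤ B.card)
    (Q : FSep G B S B') (hs : (A ∩ S).Nonempty) :
    (A ∩ S).card ≤ 2 ∧ (A ∩ B).card ≤ 1 ∧ (A ∩ B').card ≤ 1 ∧
    ((A ∩ B).card = 1 → (T ∩ B).card + (T ∩ S).card + (A ∩ S).card = 5) ∧
    ((A ∩ B').card = 1 → (T ∩ B').card + (T ∩ S).card + (A ∩ S).card = 5) := by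
  have h6 : ∀ {B S B'}, FSep G B S B' → (A ∩ S).Nonempty →
      2 ≤ (A ∩ B).card → 6 ≤ (T ∩ B).card + (T ∩ S).card + (A ∩ S).card := by
    intro B S B' Q hs h2
    have h5 := P.corner5 h Q
    by_contra hlt
    have h3 := hmin _ _ _ ⟨P.toVPart.corner Q.toVPart, h2, card_union_left_ge P.cy, by
      rw [P.toVPart.corner_card Q.toVPart]; omega⟩
    have := Q.toVPart.card A
    have := Finset.card_pos.2 hs
    omega
  have h1 := h6 Q hs
  have h2 := h6 Q.symm hs
  have h3 := P.corner5 h Q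
  have h4 := P.corner5 h Q.symm
  have h5 := P.symm.corner5 h Q
  have h7 := P.symm.corner5 h Q.symm
  have h8 := hmin _ _ _ Q
  have h9 := hmin _ _ _ Q.symm
  have h10 := hmin _ _ _ P.symm
  have h11 := Finset.card_pos.2 hs
  obtain ⟨⟨c1, c2, c3⟩, c4, c5, c6⟩ := P.toVPart.cross Q.toVPart
  have := P.cw
  have := Q.cw
  have := P.cx
  omega
end NoFour

/-! ### A side with two vertices -/

section TwoFragment
variable [Fintype V] [DecidableEq V] {G : SimpleGraph V}

/-- Some nontrivial `5`-cut has a side `A` with two vertices. A smallest side `A` with at least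
three vertices would have exactly three; each of these would see at most three vertices of the cut
`T`, while each vertex of `T` would see at least two vertices of `A`, so that `2 * 5 ≤ 3 * 3`. -/
lemma NoFour.exists_two (h : NoFour G) {x y : V} (hxy : G.Adj x y) :
    ∃ A T A', FSep G A T A' ∧ A.card = 2 := by
  classical
  obtain ⟨A, T, A', P, hmin⟩ : ∃ A T A', FSep G A T A' ∧
      ∀ B S B', FSep G B S B' → A.card ≤ B.card := by
    have hex : ∃ n, ∃ A T A', FSep G A T A' ∧ A.card = n := by
      obtain ⟨A, T, A', P, -⟩ := h.edge x y hxy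
      exact ⟨_, A, T, A', P, rfl⟩
    obtain ⟨A, T, A', P, hn⟩ := Nat.find_spec hex
    exact ⟨A, T, A', P, fun B S B' Q => hn ▸ Nat.find_min' hex ⟨B, S, B', Q, rfl⟩⟩
  refine ⟨A, T, A', P, ?_⟩
  by_contra hne
  have h2 := P.cx
  -- every edge meeting `A` lies in a cut that leaves a single vertex `p` of `A` on one side
  have C : ∀ u ∈ A, ∀ v, G.Adj u v → ∃ B S B' p, FSep G B S B' ∧ u ∈ S ∧ v ∈ S ∧ A ∩ B = {p} ∧
      (∀ t ∈ T ∩ B ∪ T ∩ S ∪ A ∩ S, G.Adj p t) ∧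
      (T ∩ B).card + (T ∩ S).card + (A ∩ S).card = 5 ∧ (A ∩ S).card ≤ 2 ∧
      ∀ q ∈ A ∩ B', ∀ t ∈ A ∩ S, G.Adj q t := by
    intro u hu v huv
    obtain ⟨B, S, B', Q, huS, hvS⟩ := h.edge u v huv
    have hs : (A ∩ S).Nonempty := ⟨u, by simp [hu, huS]⟩
    have full : ∀ {B B'}, FSep G B S B' → ∀ q ∈ A ∩ B, ∀ t ∈ T ∩ B ∪ T ∩ S ∪ A ∩ S,
        G.Adj q t := by
      intro B B' Q q hq
      obtain ⟨-, m2, -, m4, -⟩ := P.min_step h hmin Q hs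
      have := Finset.card_pos.2 ⟨q, hq⟩
      obtain ⟨p, hp⟩ := Finset.card_eq_one.1 (by omega : (A ∩ B).card = 1)
      rw [hp, Finset.mem_singleton] at hq
      subst hq
      exact P.corner_full h Q hp (m4 (by rw [hp]; simp))
    obtain ⟨m1, m2, m3, m4, m5⟩ := P.min_step h hmin Q hs
    have c := Q.toVPart.card A
    by_cases h1 : (A ∩ B).card = 1
    · obtain ⟨p, hp⟩ := Finset.card_eq_one.1 h1
      exact ⟨B, S, B', p, Q, huS, hvS, hp, full Q p (by simp [hp]), m4 h1, m1,
        fun q hq t ht => full Q.symm q hq t (Finset.mem_union_right _ ht)⟩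
    · have h1' : (A ∩ B').card = 1 := by omega
      obtain ⟨p, hp⟩ := Finset.card_eq_one.1 h1'
      exact ⟨B', S, B, p, Q.symm, huS, hvS, hp, full Q.symm p (by simp [hp]), m5 h1', m1,
        fun q hq t ht => full Q q hq t (Finset.mem_union_right _ ht)⟩
  have C2 : ∀ u ∈ A, ∀ v, G.Adj u v → ∃ S p, u ∈ S ∧ v ∈ S ∧ p ∈ A ∧ p ∉ S ∧
      (A ∩ S).card = 2 ∧ (∀ q ∈ A, q ∉ S → q = p) ∧
      (∀ t ∈ S, t ∈ T ∨ t ∈ A → G.Adj p t) ∧ (nb G p ∩ T).card ≤ 3 := by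
    intro u hu v huv
    obtain ⟨B, S, B', p, Q, huS, hvS, hp, hf, h5, hc, hq⟩ := C u hu v huv
    have hpm : p ∈ A ∩ B := by simp [hp]
    rw [Finset.mem_inter] at hpm
    have huS' : u ∈ A ∩ S := Finset.mem_inter.2 ⟨hu, huS⟩
    have hpu : G.Adj p u := hf u (Finset.mem_union_right _ huS')
    have he : A ∩ B' = ∅ := by
      by_contra hne'
      obtain ⟨q, hqm⟩ := Finset.nonempty_iff_ne_empty.2 hne'
      obtain ⟨B2, S2, B2', p2, Q2, h21, h22, hp2, hf2, -, hc2, hq2⟩ := C p hpm.1 u hpu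
      have hpS2 : p ∈ A ∩ S2 := Finset.mem_inter.2 ⟨hpm.1, h21⟩
      have huS2 : u ∈ A ∩ S2 := Finset.mem_inter.2 ⟨hu, h22⟩
      rw [Finset.mem_inter] at hqm
      have hpq : ¬ G.Adj q p := fun h' => Q.na p hpm.2 q hqm.2 h'.symm
      have hqp : q ≠ p := fun h' => Q.xy p hpm.2 (h' ▸ hqm.2)
      have hqu : q ≠ u := fun h' => Q.wy u huS (h' ▸ hqm.2)
      rcases Q2.cov q with h' | h' | h'
      · have : q ∈ A ∩ B2 := Finset.mem_inter.2 ⟨hqm.1, h'⟩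
        rw [hp2, Finset.mem_singleton] at this
        subst this
        exact hpq (hf2 p (Finset.mem_union_right _ hpS2))
      · have h3 : ({q, p, u} : Finset V) ⊆ A ∩ S2 := by
          intro z hz
          simp only [Finset.mem_insert, Finset.mem_singleton] at hz
          rcases hz with rfl | rfl | rfl
          · exact Finset.mem_inter.2 ⟨hqm.1, h'⟩
          · exact hpS2
          · exact huS2
        have := Finset.card_le_card h3
        rw [Finset.card_eq_three.2 ⟨q, p, u, hqp, hqu, hpu.ne, rfl⟩] at this
        omega
      · exact hpq (hq2 q (Finset.mem_inter.2 ⟨hqm.1, h'⟩) p hpS2)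
    have cA := Q.toVPart.card A
    rw [hp, he, Finset.card_singleton, Finset.card_empty] at cA
    refine ⟨S, p, huS, hvS, hpm.1, Q.xw p hpm.2, by omega, ?_, ?_, ?_⟩
    · intro q hqA hqS
      rcases Q.cov q with h' | h' | h'
      · have : q ∈ A ∩ B := Finset.mem_inter.2 ⟨hqA, h'⟩
        rwa [hp, Finset.mem_singleton] at this
      · exact absurd h' hqS
      · have : q ∈ A ∩ B' := Finset.mem_inter.2 ⟨hqA, h'⟩
        rw [he] at this; simp at this
    · intro t ht htt
      refine hf t ?_
      simp only [Finset.mem_union, Finset.mem_inter]; tauto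
    · have h3 : nb G p ∩ T ⊆ T ∩ B ∪ T ∩ S := by
        intro t ht
        rw [Finset.mem_inter, mem_nb] at ht
        simp only [Finset.mem_union, Finset.mem_inter]
        rcases Q.cov t with h' | h' | h'
        · tauto
        · tauto
        · exact absurd ht.1 (Q.na p hpm.2 t h')
      have := Finset.card_le_card h3
      have := Finset.card_union_le (T ∩ B) (T ∩ S)
      omega
  obtain ⟨u, hu⟩ : A.Nonempty := Finset.card_pos.1 (by omega)
  obtain ⟨t, ht⟩ : T.Nonempty := Finset.card_pos.1 (by have := P.cw; omega)
  obtain ⟨v, huv⟩ : ∃ v, G.Adj u v := by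
    have h3 : ¬ ∀ v, v ∉ nb G u := by
      intro h'
      have := h.five _ _ _ (part_nb u) ⟨u, by simp⟩ (by
        have h4 : nb G u = ∅ := Finset.eq_empty_of_forall_notMem h'
        have h5 := Finset.card_sdiff_add_card_eq_card (Finset.subset_univ (insert u (nb G u)))
        rw [h4] at h5 ⊢
        have h6 := Finset.card_le_univ T
        have := P.cw
        simp only [Finset.card_univ, insert_empty_eq, Finset.card_singleton] at h5 ⊢
        omega)
      rw [Finset.eq_empty_of_forall_notMem h'] at this
      simp at this
    push Not at h3
    obtain ⟨v, hv⟩ := h3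
    exact ⟨v, mem_nb.1 hv⟩
  obtain ⟨S, p, huS, -, hpA, hpS, hc, hq, hpa, hp3⟩ := C2 u hu v huv
  obtain ⟨w, hw⟩ := Finset.card_eq_one.1 (by
    rw [Finset.card_erase_of_mem (Finset.mem_inter.2 ⟨hu, huS⟩)]; omega :
      ((A ∩ S).erase u).card = 1)
  have hwm : w ∈ (A ∩ S).erase u := by simp [hw]
  simp only [Finset.mem_erase, Finset.mem_inter] at hwm
  obtain ⟨hwu, hwA, hwS⟩ := hwm
  have hA : ∀ z ∈ A, z = u ∨ z = w ∨ z = p := by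
    intro z hz
    by_cases hzS : z ∈ S
    · by_cases hzu : z = u
      · exact Or.inl hzu
      · have : z ∈ (A ∩ S).erase u := by simp [hz, hzS, hzu]
        rw [hw, Finset.mem_singleton] at this
        exact Or.inr (Or.inl this)
    · exact Or.inr (Or.inr (hq z hz hzS))
  have hpu := hpa u huS (Or.inr hu)
  have hpw := hpa w hwS (Or.inr hwA)
  -- the remaining vertex of an edge inside `A`
  have last : ∀ a ∈ A, ∀ b ∈ A, ∀ c ∈ A, G.Adj a b → a ≠ c → b ≠ c →
      (∀ z ∈ A, z = a ∨ z = b ∨ z = c) → (nb G c ∩ T).card ≤ 3 := by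
    intro a ha b hb c hcA hab hac hbc hall
    obtain ⟨S2, p2, ha2, hb2, hp2A, hp2S, -, -, -, h3⟩ := C2 a ha b hab
    rcases hall p2 hp2A with rfl | rfl | rfl
    · exact absurd ha2 hp2S
    · exact absurd hb2 hp2S
    · exact h3
  have hA3 : ∀ z ∈ A, (nb G z ∩ T).card ≤ 3 := by
    intro z hz
    rcases hA z hz with rfl | rfl | rfl
    · exact last p hpA w hwA z hz hpw hpu.ne (Ne.symm (Ne.symm hwu))
        (fun y hy => by have := hA y hy; tauto)
    · exact last p hpA u hu z hz hpu hpw.ne (Ne.symm hwu)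
        (fun y hy => by have := hA y hy; tauto)
    · exact hp3
  have hT2 : ∀ x ∈ T, 2 ≤ (A.filter (fun a => G.Adj a x)).card := by
    intro x hx
    obtain ⟨z, hz, hxz⟩ := (P.full h hx).1
    obtain ⟨S2, p2, hz2, hx2, hp2A, hp2S, -, -, h3, -⟩ := C2 z hz x hxz.symm
    have : ({z, p2} : Finset V) ⊆ A.filter (fun a => G.Adj a x) := by
      intro y hy
      simp only [Finset.mem_insert, Finset.mem_singleton] at hy
      rw [Finset.mem_filter]
      rcases hy with rfl | rfl
      · exact ⟨hz, hxz.symm⟩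
      · exact ⟨hp2A, h3 x hx2 (Or.inl hx)⟩
    have h4 := Finset.card_le_card this
    rwa [Finset.card_pair (by rintro rfl; exact hp2S hz2)] at h4
  -- double counting of the edges between `A` and `T`
  have hdc := Finset.sum_card_bipartiteAbove_eq_sum_card_bipartiteBelow (s := A) (t := T) G.Adj
  have h10 := Finset.card_nsmul_le_sum T (fun x => (A.bipartiteBelow G.Adj x).card) 2 hT2
  have h9 := Finset.sum_le_card_nsmul A (fun x => (T.bipartiteAbove G.Adj x).card) 3 (by
    intro z hz
    have : T.bipartiteAbove G.Adj z = nb G z ∩ T := by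
      ext y; simp only [Finset.mem_bipartiteAbove, Finset.mem_inter, mem_nb]; tauto
    rw [this]
    exact hA3 z hz)
  have hA3' : A.card ≤ 3 := by
    have : A ⊆ {u, w, p} := by
      intro z hz; have := hA z hz; simpa using this
    exact (Finset.card_le_card this).trans Finset.card_le_three
  have := P.cw
  simp only [smul_eq_mul] at h10 h9
  omega
end TwoFragment

/-! ### Cuts crossing a two-vertex side -/

section TwoAnalysis
variable [Fintype V] [DecidableEq V] {G : SimpleGraph V}

lemma exists_other {M : Finset V} {q : V} (h : M.card = 2) (hq : q ∈ M) :
    ∃ r ∈ M, r ≠ q ∧ ∀ u ∈ M, u = q ∨ u = r := by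
  obtain ⟨r, hr⟩ := Finset.card_eq_one.1 (by rw [Finset.card_erase_of_mem hq]; omega :
    (M.erase q).card = 1)
  have h1 : r ∈ M.erase q := by simp [hr]
  rw [Finset.mem_erase] at h1
  refine ⟨r, h1.2, h1.1, fun u hu => ?_⟩
  by_cases huq : u = q
  · exact Or.inl huq
  · have : u ∈ M.erase q := by simp [hu, huq]
    rw [hr, Finset.mem_singleton] at this
    exact Or.inr this

/-- Two cut vertices seeing only `r` inside `X` force `X = {r}`. -/
lemma NoFour.eq_singleton (h : NoFour G) {X W Y : Finset V} (P : VPart G X W Y)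
    (hW : W.card = 5) (hY : 2 ≤ Y.card) {z w r : V} (hz : z ∈ W) (hw : w ∈ W) (hzw : z ≠ w)
    (hr : r ∈ X) (hz' : ∀ x ∈ X, G.Adj z x → x = r) (hw' : ∀ x ∈ X, G.Adj w x → x = r) :
    X = {r} ∧ ∀ u ∈ W, G.Adj r u := by
  have hX : X = {r} := by
    by_contra hne
    have h1 : (X.erase r).Nonempty := by
      rw [Finset.nonempty_iff_ne_empty]
      intro h'
      rw [Finset.erase_eq_empty_iff] at h'
      rcases h' with h' | h'
      · rw [h'] at hr; simp at hr
      · exact hne h'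
    have hz2 : z ∈ insert r W := Finset.mem_insert_of_mem hz
    have hw2 : w ∈ insert r W := Finset.mem_insert_of_mem hw
    have hsub : ({z, w} : Finset V) ⊆ insert r W := by
      intro u hu
      simp only [Finset.mem_insert, Finset.mem_singleton] at hu
      rcases hu with rfl | rfl
      · exact hz2
      · exact hw2
    have h5 := h.five _ _ _ ((P.move r hr).shrink {z, w} hsub (by
      intro u hu x hx hux
      simp only [Finset.mem_insert, Finset.mem_singleton] at hu
      rw [Finset.mem_erase] at hx
      rcases hu with rfl | rfl
      · exact hx.1 (hz' x hx.2 hux)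
      · exact hx.1 (hw' x hx.2 hux))) h1 (card_union_left_ge hY)
    rw [Finset.card_sdiff_of_subset hsub, Finset.card_pair hzw,
      Finset.card_insert_of_notMem (P.xw r hr)] at h5
    omega
  refine ⟨hX, fun u hu => ?_⟩
  obtain ⟨x, hx, hux⟩ := h.full P ⟨r, hr⟩ hY hW hu
  rw [hX, Finset.mem_singleton] at hx
  subst hx; exact hux.symm

/-- The pair `{z, w}` is a side of a nontrivial `5`-cut `T`. -/
structure TwoFrag (G : SimpleGraph V) (z w : V) (T A' : Finset V) : Prop where
  sep : FSep G {z, w} T A'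
  ne : z ≠ w

lemma TwoFrag.symm {z w : V} {T A' : Finset V} (F : TwoFrag G z w T A') : TwoFrag G w z T A' :=
  ⟨by rw [Finset.pair_comm]; exact F.sep, F.ne.symm⟩

/-- A nontrivial `5`-cut through `z` and `w` that meets `T` in `t` alone and halves `T - t`. -/
def TypeTwo (G : SimpleGraph V) (z w : V) (T : Finset V) (t : V) : Prop :=
  ∃ B S B', FSep G B S B' ∧ z ∈ S ∧ w ∈ S ∧ T ∩ S = {t} ∧ (T ∩ B).card = 2 ∧ (T ∩ B').card = 2

lemma TypeTwo.symm {z w : V} {T : Finset V} {t : V} (h : TypeTwo G z w T t) :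
    TypeTwo G w z T t := by
  obtain ⟨B, S, B', h1, h2, h3, h4⟩ := h
  exact ⟨B, S, B', h1, h3, h2, h4⟩

/-- A nontrivial `5`-cut through `z` and `t` that separates `w` from the single vertex `y`
of `T`, which is then the only vertex of `T` not adjacent to `w`. -/
structure TypeOne (G : SimpleGraph V) (z w : V) (T : Finset V) (t y : V) (B S B' : Finset V) :
    Prop where
  sep : FSep G B S B'
  mz : z ∈ S
  mt : t ∈ S
  mw : w ∈ B
  hy : T ∩ B' = {y}
  ne : (T ∩ B).Nonempty
  wz : G.Adj w z
  wT : ∀ u ∈ T, u ≠ y → G.Adj w u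
  wy : ¬ G.Adj w y

/-- An edge from the side `{z, w}` to a vertex `t` of the cut `T` lies in a nontrivial `5`-cut that
either contains both `z` and `w` (type two) or separates `w` from a vertex of `T` (type one). -/
lemma TwoFrag.type (h : NoFour G) {z w : V} {T A' : Finset V} (F : TwoFrag G z w T A') {t : V}
    (ht : t ∈ T) (htz : G.Adj t z) :
    TypeTwo G z w T t ∨ ∃ y B S B', TypeOne G z w T t y B S B' := by
  obtain ⟨B, S, B', Q, htS, hzS⟩ := h.edge t z htz
  have P := F.sep
  have hcA : ({z, w} : Finset V).card = 2 := Finset.card_pair F.ne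
  have htc : 1 ≤ (T ∩ S).card := Finset.card_pos.2 ⟨t, Finset.mem_inter.2 ⟨ht, htS⟩⟩
  have aux : ∀ {B B'}, FSep G B S B' → w ∈ B → ∃ y B S B', TypeOne G z w T t y B S B' := by
    intro B B' Q hwB
    have hAB : ({z, w} : Finset V) ∩ B = {w} := by
      ext u; simp only [Finset.mem_inter, Finset.mem_insert, Finset.mem_singleton]
      constructor
      · rintro ⟨rfl | rfl, h'⟩
        · exact absurd hzS (Q.xw _ h')
        · rfl
      · rintro rfl; exact ⟨Or.inr rfl, hwB⟩
    have h1 := P.corner5 h Q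
    have h2 := P.symm.corner5 h Q.symm
    have h2' := P.symm.corner5 h Q
    obtain ⟨⟨c1, c2, c3⟩, c4, c5, c6⟩ := P.toVPart.cross Q.toVPart
    have hs : 1 ≤ (({z, w} : Finset V) ∩ S).card :=
      Finset.card_pos.2 ⟨z, by simp [hzS]⟩
    have := P.cw
    have := Q.cw
    have := Q.cy
    have := Q.cx
    rw [hcA] at c1
    rw [hAB, Finset.card_singleton] at h1 c1 c4
    obtain ⟨y, hy⟩ := Finset.card_eq_one.1 (by omega : (T ∩ B').card = 1)
    have hym : y ∈ T ∩ B' := by simp [hy]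
    rw [Finset.mem_inter] at hym
    have hf := P.corner_full h Q hAB (by omega)
    refine ⟨y, B, S, B', Q, hzS, htS, hwB, hy, Finset.card_pos.1 (by omega), ?_, ?_, ?_⟩
    · exact hf z (by simp [hzS])
    · intro u hu huy
      refine hf u ?_
      simp only [Finset.mem_union, Finset.mem_inter]
      rcases Q.cov u with h' | h' | h'
      · tauto
      · tauto
      · have : u ∈ T ∩ B' := Finset.mem_inter.2 ⟨hu, h'⟩
        rw [hy, Finset.mem_singleton] at this
        exact absurd this huy
    · exact Q.na w hwB y hym.2
  rcases Q.cov w with hw | hw | hw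
  · exact Or.inr (aux Q hw)
  · left
    have hAS : ({z, w} : Finset V) ∩ S = {z, w} := by
      rw [Finset.inter_eq_left]
      intro u hu
      simp only [Finset.mem_insert, Finset.mem_singleton] at hu
      rcases hu with rfl | rfl <;> assumption
    have h2 := P.symm.corner5 h Q.symm
    have h2' := P.symm.corner5 h Q
    obtain ⟨⟨c1, c2, c3⟩, c4, c5, c6⟩ := P.toVPart.cross Q.toVPart
    rw [hAS, hcA] at c1 c5
    have := P.cw
    have := Q.cw
    have := Q.cy
    have := Q.cx
    obtain ⟨y, hy⟩ := Finset.card_eq_one.1 (by omega : (T ∩ S).card = 1)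
    have : t ∈ T ∩ S := Finset.mem_inter.2 ⟨ht, htS⟩
    rw [hy, Finset.mem_singleton] at this
    subst this
    exact ⟨B, S, B', Q, hzS, hw, hy, by omega, by omega⟩
  · exact Or.inr (aux Q.symm hw)

/-- Both ends of a two-vertex side see, in a set avoiding that side, only vertices of `T`. -/
lemma TwoFrag.mem_T {z w : V} {T A' : Finset V} (F : TwoFrag G z w T A') {x : V}
    (hxz : x ≠ z) (hxw : x ≠ w) (h : G.Adj z x ∨ G.Adj w x) : x ∈ T := by
  rcases F.sep.cov x with h' | h' | h'
  · simp only [Finset.mem_insert, Finset.mem_singleton] at h'; tauto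
  · exact h'
  · rcases h with h | h
    · exact absurd h (F.sep.na z (by simp) x h')
    · exact absurd h (F.sep.na w (by simp) x h')

set_option maxHeartbeats 1000000 in
/-- Two type-two cuts, at `p` and at `q`, leave two possible adjacency patterns on `T`: either some
`r` is adjacent to both `p` and `q`, or `T` carries the disjoint edges `rq`, `sp` and a vertex
`t` adjacent to none of `p`, `q`, `r`, `s`. -/
lemma TwoFrag.two_types (h : NoFour G) {z w : V} {T A' : Finset V} (F : TwoFrag G z w T A')
    {p q : V} (hp : TypeTwo G z w T p) (hq : TypeTwo G z w T q) (hpq : p ≠ q) :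
    (∃ r k, r ∈ T ∧ r ≠ p ∧ r ≠ q ∧ G.Adj r p ∧ G.Adj r q ∧ G.Adj r z ∧ G.Adj r w ∧
      (∀ u, G.Adj r u → u = z ∨ u = w ∨ u = p ∨ u = q ∨ u = k) ∧
      ∀ s ∈ T, s ≠ p → s ≠ q → s ≠ r → ¬ G.Adj s p ∧ ¬ G.Adj s q ∧ ¬ G.Adj s r) ∨
    (∃ r s t, r ∈ T ∧ s ∈ T ∧ t ∈ T ∧ r ≠ p ∧ r ≠ q ∧ s ≠ p ∧ s ≠ q ∧ r ≠ s ∧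
      t ≠ p ∧ t ≠ q ∧ t ≠ r ∧ t ≠ s ∧ (∀ u ∈ T, u = p ∨ u = q ∨ u = r ∨ u = s ∨ u = t) ∧
      G.Adj r q ∧ G.Adj s p ∧ ¬ G.Adj r p ∧ ¬ G.Adj s q ∧ ¬ G.Adj r s ∧
      ¬ G.Adj t p ∧ ¬ G.Adj t q ∧ ¬ G.Adj t r ∧ ¬ G.Adj t s) := by
  obtain ⟨B, S, B', Q, hqB, hzS, hwS, hTS, hTB, hTB'⟩ : ∃ B S B', FSep G B S B' ∧ q ∈ B ∧ z ∈ S ∧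
      w ∈ S ∧ T ∩ S = {p} ∧ (T ∩ B).card = 2 ∧ (T ∩ B').card = 2 := by
    obtain ⟨B, S, B', Q, h1, h2, h3, h4, h5⟩ := hp
    rcases Q.cov q with h' | h' | h'
    · exact ⟨B, S, B', Q, h', h1, h2, h3, h4, h5⟩
    · obtain ⟨_, _, _, _, _, _, h6, _⟩ := hq
      have : q ∈ T := by have : q ∈ ({q} : Finset V) := by simp
                         rw [← h6, Finset.mem_inter] at this; exact this.1
      have : q ∈ T ∩ S := Finset.mem_inter.2 ⟨this, h'⟩
      rw [h3, Finset.mem_singleton] at this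
      exact absurd this.symm hpq
    · exact ⟨B', S, B, Q.symm, h', h1, h2, h3, h5, h4⟩
  have hpTS : p ∈ T ∩ S := by simp [hTS]
  rw [Finset.mem_inter] at hpTS
  obtain ⟨hpT, hpS⟩ := hpTS
  obtain ⟨C, R, C', Q2, hpC, hzR, hwR, hTR, hTC, hTC'⟩ : ∃ B S B', FSep G B S B' ∧ p ∈ B ∧
      z ∈ S ∧ w ∈ S ∧ T ∩ S = {q} ∧ (T ∩ B).card = 2 ∧ (T ∩ B').card = 2 := by
    obtain ⟨B, S, B', Q, h1, h2, h3, h4, h5⟩ := hq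
    rcases Q.cov p with h' | h' | h'
    · exact ⟨B, S, B', Q, h', h1, h2, h3, h4, h5⟩
    · have : p ∈ T ∩ S := Finset.mem_inter.2 ⟨hpT, h'⟩
      rw [h3, Finset.mem_singleton] at this
      exact absurd this hpq
    · exact ⟨B', S, B, Q.symm, h', h1, h2, h3, h5, h4⟩
  have hqTR : q ∈ T ∩ R := by simp [hTR]
  rw [Finset.mem_inter] at hqTR
  obtain ⟨hqT, hqR⟩ := hqTR
  obtain ⟨r, hrm, hrq, hrB⟩ := exists_other hTB (Finset.mem_inter.2 ⟨hqT, hqB⟩)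
  obtain ⟨s, hsm, hsp, hsC⟩ := exists_other hTC (Finset.mem_inter.2 ⟨hpT, hpC⟩)
  rw [Finset.mem_inter] at hrm hsm
  obtain ⟨hrT, hrBm⟩ := hrm
  obtain ⟨hsT, hsCm⟩ := hsm
  have hTS' : ∀ u ∈ T, u ∈ S → u = p := fun u h1 h2 => by
    have : u ∈ T ∩ S := Finset.mem_inter.2 ⟨h1, h2⟩
    rwa [hTS, Finset.mem_singleton] at this
  have hTR' : ∀ u ∈ T, u ∈ R → u = q := fun u h1 h2 => by
    have : u ∈ T ∩ R := Finset.mem_inter.2 ⟨h1, h2⟩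
    rwa [hTR, Finset.mem_singleton] at this
  have hTB2 : ∀ u ∈ T, u ∈ B → u = q ∨ u = r := fun u h1 h2 => hrB u (Finset.mem_inter.2 ⟨h1, h2⟩)
  have hTC2 : ∀ u ∈ T, u ∈ C → u = p ∨ u = s := fun u h1 h2 => hsC u (Finset.mem_inter.2 ⟨h1, h2⟩)
  have hrp : r ≠ p := by rintro rfl; exact Q.xw r hrBm hpS
  have hsq : s ≠ q := by rintro rfl; exact Q2.xw s hsCm hqR
  obtain ⟨⟨c1, c2, c3⟩, c4, c5, c6⟩ := Q.toVPart.cross Q2.toVPart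
  have hSR : 2 ≤ (S ∩ R).card := by
    rw [← Finset.card_pair F.ne]
    refine Finset.card_le_card fun u hu => ?_
    simp only [Finset.mem_insert, Finset.mem_singleton] at hu
    rw [Finset.mem_inter]
    rcases hu with rfl | rfl
    · exact ⟨hzS, hzR⟩
    · exact ⟨hwS, hwR⟩
  have k1 := Q.corner5 h Q2
  have k2 := Q.corner5 h Q2.symm
  have k3 := Q.symm.corner5 h Q2
  have k4 := Q.symm.corner5 h Q2.symm
  have w1 := Q.cw
  have w2 := Q2.cw
  have hpos1 : 1 ≤ (S ∩ C).card := Finset.card_pos.2 ⟨p, Finset.mem_inter.2 ⟨hpS, hpC⟩⟩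
  have hpos2 : 1 ≤ (B ∩ R).card := Finset.card_pos.2 ⟨q, Finset.mem_inter.2 ⟨hqB, hqR⟩⟩
  have sum1 : 1 ≤ (B ∩ C).card → 1 ≤ (B' ∩ C').card →
      (S ∩ C).card + (S ∩ R).card + (B ∩ R).card = 5 := by
    clear k2 k3; intro h1 h2; omega
  have sum2 : 1 ≤ (B ∩ C').card → 1 ≤ (B' ∩ C).card →
      (S ∩ C').card + (S ∩ R).card + (B ∩ R).card = 5 ∧
      (S ∩ C).card + (S ∩ R).card + (B' ∩ R).card = 5 := by
    clear k1 k4; intro h1 h2; omega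
  clear c1 c2 c3 c4 c5 c6 hSR k1 k2 k3 k4 w1 w2 hpos1 hpos2
  -- a corner with a boundary of size five containing a single vertex of `T`
  have single : ∀ {B B' C C' : Finset V} {x : V}, FSep G B S B' → FSep G C R C' →
      (S ∩ C).card + (S ∩ R).card + (B ∩ R).card = 5 → x ∈ B ∩ C →
      (∀ u ∈ T, u ∈ B → u ∈ C → u = x) →
      B ∩ C = {x} ∧ ∀ u ∈ S ∩ C ∪ S ∩ R ∪ B ∩ R, G.Adj x u := by
    intro B B' C C' x Q Q2 h5 hx hu
    refine h.eq_singleton (Q.toVPart.corner Q2.toVPart)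
      (by rw [Q.toVPart.corner_card Q2.toVPart]; exact h5) (card_union_left_ge Q.cy)
      (z := z) (w := w) ?_ ?_ F.ne hx ?_ ?_
    · simp [hzS, hzR]
    · simp [hwS, hwR]
    · intro v hv hzv
      rw [Finset.mem_inter] at hv
      exact hu v (F.mem_T hzv.ne' (fun h' => Q.xw v hv.1 (h' ▸ hwS)) (Or.inl hzv)) hv.1 hv.2
    · intro v hv hzv
      rw [Finset.mem_inter] at hv
      exact hu v (F.mem_T (fun h' => Q.xw v hv.1 (h' ▸ hzS)) hzv.ne' (Or.inr hzv)) hv.1 hv.2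
  rcases Q2.cov r with hrC | hrC | hrC
  · left
    have hrs : r = s := (hTC2 r hrT hrC).resolve_left hrp
    subst hrs
    have hrBC : r ∈ B ∩ C := Finset.mem_inter.2 ⟨hrBm, hrC⟩
    have hp1 := Finset.card_pos.2 ⟨r, hrBC⟩
    have hother : ∀ u ∈ T, u ≠ p → u ≠ q → u ≠ r → u ∈ B' ∧ u ∈ C' := by
      intro u hu h1 h2 h3
      constructor
      · rcases Q.cov u with h' | h' | h'
        · exact absurd (hTB2 u hu h') (by tauto)
        · exact absurd (hTS' u hu h') h1
        · exact h'
      · rcases Q2.cov u with h' | h' | h'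
        · exact absurd (hTC2 u hu h') (by tauto)
        · exact absurd (hTR' u hu h') h2
        · exact h'
    have hp4 : 1 ≤ (B' ∩ C').card := by
      obtain ⟨u, hu⟩ := Finset.card_pos.1 (by omega : 0 < (T ∩ B').card)
      rw [Finset.mem_inter] at hu
      refine Finset.card_pos.2 ⟨u, Finset.mem_inter.2 (hother u hu.1 ?_ ?_ ?_)⟩
      · rintro rfl; exact Q.wy u hpS hu.2
      · rintro rfl; exact Q.xy u hqB hu.2
      · rintro rfl; exact Q.xy u hrBm hu.2
    have h5 : (S ∩ C).card + (S ∩ R).card + (B ∩ R).card = 5 :=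
      sum1 hp1 hp4
    obtain ⟨hs1, hs2⟩ := single Q Q2 h5 hrBC (fun u hu h1 h2 => by
      rcases hTB2 u hu h1 with rfl | rfl
      · exact absurd hqR (Q2.xw _ h2)
      · rfl)
    have hbd : ∀ u, u ∈ S ∩ C ∪ S ∩ R ∪ B ∩ R ↔ (u ∈ S ∧ u ∈ C) ∨ (u ∈ S ∧ u ∈ R) ∨
        (u ∈ B ∧ u ∈ R) := by
      intro u; simp only [Finset.mem_union, Finset.mem_inter]; tauto
    have hzb := (hbd z).2 (Or.inr (Or.inl ⟨hzS, hzR⟩))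
    have hwb := (hbd w).2 (Or.inr (Or.inl ⟨hwS, hwR⟩))
    have hpb := (hbd p).2 (Or.inl ⟨hpS, hpC⟩)
    have hqb := (hbd q).2 (Or.inr (Or.inr ⟨hqB, hqR⟩))
    have hzT : z ∉ T := F.sep.xw z (by simp)
    have hwT : w ∉ T := F.sep.xw w (by simp)
    obtain ⟨k, hk⟩ : ∃ k, ∀ u ∈ S ∩ C ∪ S ∩ R ∪ B ∩ R, u = z ∨ u = w ∨ u = p ∨ u = q ∨ u = k := by
      have h4 : ({z, w, p, q} : Finset V).card = 4 := by
        rw [Finset.card_insert_of_notMem, Finset.card_insert_of_notMem, Finset.card_pair hpq]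
        · simp only [Finset.mem_insert, Finset.mem_singleton, not_or]
          exact ⟨fun h' => hwT (h' ▸ hpT), fun h' => hwT (h' ▸ hqT)⟩
        · simp only [Finset.mem_insert, Finset.mem_singleton, not_or]
          exact ⟨F.ne, fun h' => hzT (h' ▸ hpT), fun h' => hzT (h' ▸ hqT)⟩
      have hsub : ({z, w, p, q} : Finset V) ⊆ S ∩ C ∪ S ∩ R ∪ B ∩ R := by
        intro u hu
        simp only [Finset.mem_insert, Finset.mem_singleton] at hu
        rcases hu with rfl | rfl | rfl | rfl <;> assumption
      obtain ⟨k, hk⟩ := Finset.card_eq_one.1 (by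
        rw [Finset.card_sdiff_of_subset hsub, Q.toVPart.corner_card Q2.toVPart]; omega :
        ((S ∩ C ∪ S ∩ R ∪ B ∩ R) \ {z, w, p, q}).card = 1)
      refine ⟨k, fun u hu => ?_⟩
      by_cases hu' : u ∈ ({z, w, p, q} : Finset V)
      · simp only [Finset.mem_insert, Finset.mem_singleton] at hu'; tauto
      · have := Finset.mem_sdiff.2 ⟨hu, hu'⟩
        rw [hk, Finset.mem_singleton] at this
        tauto
    refine ⟨r, k, hrT, hrp, hrq, hs2 p hpb, hs2 q hqb, hs2 z hzb, hs2 w hwb, ?_, ?_⟩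
    · intro u hu
      refine hk u ((hbd u).2 ?_)
      have hu1 : u ∉ B' := fun h' => Q.na r hrBm u h' hu
      have hu2 : u ∉ C' := fun h' => Q2.na r hrC u h' hu
      have hu3 : ¬ (u ∈ B ∧ u ∈ C) := by
        rintro h'
        have : u ∈ B ∩ C := Finset.mem_inter.2 h'
        rw [hs1, Finset.mem_singleton] at this
        exact hu.ne this.symm
      have := Q.cov u
      have := Q2.cov u
      tauto
    · intro u hu h1 h2 h3
      obtain ⟨hu1, hu2⟩ := hother u hu h1 h2 h3
      exact ⟨fun h' => Q2.na p hpC u hu2 h'.symm, fun h' => Q.na q hqB u hu1 h'.symm,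
        fun h' => Q.na r hrBm u hu1 h'.symm⟩
  · exact absurd (hTR' r hrT hrC) hrq
  · right
    have hrs : r ≠ s := by rintro rfl; exact Q2.xy r hsCm hrC
    have hsB' : s ∈ B' := by
      rcases Q.cov s with h' | h' | h'
      · exact absurd (hTB2 s hsT h') (by tauto)
      · exact absurd (hTS' s hsT h') hsp
      · exact h'
    obtain ⟨t, htm, hts, htu⟩ := exists_other hTB' (Finset.mem_inter.2 ⟨hsT, hsB'⟩)
    rw [Finset.mem_inter] at htm
    have htp : t ≠ p := by rintro rfl; exact Q.wy t hpS htm.2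
    have htq : t ≠ q := by rintro rfl; exact Q.xy t hqB htm.2
    have htr : t ≠ r := by rintro rfl; exact Q.xy t hrBm htm.2
    have htC' : t ∈ C' := by
      rcases Q2.cov t with h' | h' | h'
      · exact absurd (hTC2 t htm.1 h') (by tauto)
      · exact absurd (hTR' t htm.1 h') htq
      · exact h'
    have hr1 : r ∈ B ∩ C' := Finset.mem_inter.2 ⟨hrBm, hrC⟩
    have hs1 : s ∈ B' ∩ C := Finset.mem_inter.2 ⟨hsB', hsCm⟩
    have hr2 := Finset.card_pos.2 ⟨r, hr1⟩
    have hs2 := Finset.card_pos.2 ⟨s, hs1⟩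
    obtain ⟨-, hr3⟩ := single Q Q2.symm (sum2 hr2 hs2).1 hr1 (fun u hu h1 h2 => by
      rcases hTB2 u hu h1 with rfl | rfl
      · exact absurd h2 (Q2.wy _ hqR)
      · rfl)
    obtain ⟨-, hs3⟩ := single Q.symm Q2 (sum2 hr2 hs2).2 hs1 (fun u hu h1 h2 => by
      rcases hTC2 u hu h2 with rfl | rfl
      · exact absurd h1 (Q.wy _ hpS)
      · rfl)
    refine ⟨r, s, t, hrT, hsT, htm.1, hrp, hrq, hsp, hsq, hrs, htp, htq, htr, hts, ?_,
      hr3 q (by simp [hqB, hqR]), hs3 p (by simp [hpS, hpC]), fun h' => Q2.na p hpC r hrC h'.symm,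
      fun h' => Q.na q hqB s hsB' h'.symm, Q.na r hrBm s hsB',
      fun h' => Q2.na p hpC t htC' h'.symm, fun h' => Q.na q hqB t htm.2 h'.symm,
      fun h' => Q.na r hrBm t htm.2 h'.symm, fun h' => Q2.na s hsCm t htC' h'.symm⟩
    intro u hu
    rcases Q.cov u with h' | h' | h'
    · rcases hTB2 u hu h' with h'' | h'' <;> tauto
    · exact Or.inl (hTS' u hu h')
    · rcases htu u (Finset.mem_inter.2 ⟨hu, h'⟩) with h'' | h'' <;> tauto
end TwoAnalysis

/-! ### The structure of a two-vertex side -/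

section TwoStructure
variable [Fintype V] [DecidableEq V] {G : SimpleGraph V}

/-- If type-two cuts exist at `p` and `q`, then apart from possibly `p`, the vertex `q` has exactly
one neighbour in `T`. -/
lemma TwoFrag.unique_nbr (h : NoFour G) {z w : V} {T A' : Finset V} (F : TwoFrag G z w T A')
    {p q : V} (hp : TypeTwo G z w T p) (hq : TypeTwo G z w T q) (hpq : p ≠ q) :
    ∃ r ∈ T, r ≠ p ∧ r ≠ q ∧ G.Adj q r ∧ ∀ u ∈ T, u ≠ p → G.Adj q u → u = r := by
  rcases F.two_types h hp hq hpq with ⟨r, k, hr, h1, h2, -, h3, -, -, -, h4⟩ |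
    ⟨r, s, t, hr, hs, ht, h1, h2, h3, h4, h5, h6, h7, h8, h9, h10, h11, h12, h13, h14, h15, h16, h17,
      h18, h19⟩
  · refine ⟨r, hr, h1, h2, h3.symm, fun u hu hup hqu => ?_⟩
    by_contra hur
    exact (h4 u hu hup hqu.ne' hur).2.1 hqu.symm
  · refine ⟨r, hr, h1, h2, h11.symm, fun u hu hup hqu => ?_⟩
    rcases h10 u hu with rfl | rfl | rfl | rfl | rfl
    · exact absurd rfl hup
    · exact absurd hqu (G.loopless.irrefl _)
    · rfl
    · exact absurd hqu.symm h14
    · exact absurd hqu.symm h17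

lemma TypeTwo.mem {z w : V} {T : Finset V} {t : V} (h : TypeTwo G z w T t) : t ∈ T := by
  obtain ⟨_, S, _, _, _, _, h4, _⟩ := h
  have : t ∈ T ∩ S := by simp [h4]
  exact (Finset.mem_inter.1 this).1

/-- A type-two cut at `t` leaves no path on three further vertices of `T`. -/
lemma TypeTwo.no_path {z w : V} {T : Finset V} {t a b c : V} (h : TypeTwo G z w T t)
    (ha : a ∈ T) (hb : b ∈ T) (hc : c ∈ T) (hat : a ≠ t) (hbt : b ≠ t) (hct : c ≠ t)
    (hac : a ≠ c) (hab : G.Adj a b) (hbc : G.Adj b c) : False := by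
  obtain ⟨B, S, B', Q, -, -, h4, h5, h6⟩ := h
  have hS : ∀ u ∈ T, u ≠ t → u ∉ S := fun u hu hut huS => by
    have : u ∈ T ∩ S := Finset.mem_inter.2 ⟨hu, huS⟩
    rw [h4, Finset.mem_singleton] at this
    exact hut this
  have aux : ∀ {B B' : Finset V}, FSep G B S B' → (T ∩ B).card = 2 → b ∈ B → False := by
    intro B B' Q h5 hbB
    have haB : a ∈ B := by
      rcases Q.cov a with h' | h' | h'
      · exact h'
      · exact absurd h' (hS a ha hat)
      · exact absurd hab.symm (Q.na b hbB a h')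
    have hcB : c ∈ B := by
      rcases Q.cov c with h' | h' | h'
      · exact h'
      · exact absurd h' (hS c hc hct)
      · exact absurd hbc (Q.na b hbB c h')
    have h3 : ({a, b, c} : Finset V) ⊆ T ∩ B := by
      intro u hu
      simp only [Finset.mem_insert, Finset.mem_singleton] at hu
      rcases hu with rfl | rfl | rfl <;> simp [*]
    have := Finset.card_le_card h3
    rw [Finset.card_eq_three.2 ⟨a, b, c, hab.ne, hac, hbc.ne, rfl⟩] at this
    omega
  rcases Q.cov b with h' | h' | h7
  · exact aux Q h5 h'
  · exact hS b hb hbt h'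
  · exact aux Q.symm h6 h7

/-- Not every vertex of `T` admits a type-two cut: the first pattern of `TwoFrag.two_types` contains
a path, which `TypeTwo.no_path` forbids, and the second contains an isolated vertex, which
`TwoFrag.unique_nbr` forbids. -/
lemma TwoFrag.exists_not_typeTwo (h : NoFour G) {z w : V} {T A' : Finset V}
    (F : TwoFrag G z w T A') : ∃ t ∈ T, ¬ TypeTwo G z w T t := by
  by_contra hall
  push Not at hall
  obtain ⟨p, hp, q, hq, hpq⟩ := Finset.one_lt_card.1 (by have := F.sep.cw; omega : 1 < T.card)
  rcases F.two_types h (hall p hp) (hall q hq) hpq with ⟨r, k, hr, h1, h2, h3, h4, -⟩ |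
    ⟨r, s, t, hr, hs, ht, h1, h2, h3, h4, h5, h6, h7, h8, h9, h10, h11, h12, h13, h14, h15, h16, h17,
      h18, h19⟩
  · obtain ⟨s, hs⟩ := Finset.card_pos.1 (by
      have h5 := Finset.le_card_sdiff {p, q, r} T
      have h6 := Finset.card_le_three (a := p) (b := q) (c := r)
      have := F.sep.cw
      omega : 0 < (T \ {p, q, r}).card)
    simp only [Finset.mem_sdiff, Finset.mem_insert, Finset.mem_singleton, not_or] at hs
    exact (hall s hs.1).no_path hp hr hq (Ne.symm hs.2.1) (Ne.symm hs.2.2.2) (Ne.symm hs.2.2.1)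
      hpq h3.symm h4
  · obtain ⟨u, hu, -, -, htu, -⟩ := F.unique_nbr h (hall p hp) (hall t ht) (Ne.symm h6)
    rcases h10 u hu with rfl | rfl | rfl | rfl | rfl
    · exact h16 htu
    · exact h17 htu
    · exact h18 htu
    · exact h19 htu
    · exact htu.ne rfl

/-- The structure of a two-vertex side `{z, w}`: `w` misses exactly `y` in `T`,
`z` misses exactly `y'` in `T`, there are type-two cuts at `y` and at `y'`, and every vertex `t`
of `T` without a type-two cut admits a type-one cut through `z` and `t` that separates `w`
from `y`. -/
structure Missing (G : SimpleGraph V) (z w : V) (T A' : Finset V) (y y' : V) : Prop where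
  frag : TwoFrag G z w T A'
  ne : y ≠ y'
  t2 : TypeTwo G z w T y
  t2' : TypeTwo G z w T y'
  zw : G.Adj z w
  wy : ¬ G.Adj w y
  wT : ∀ u ∈ T, u ≠ y → G.Adj w u
  zy : ¬ G.Adj z y'
  zT : ∀ u ∈ T, u ≠ y' → G.Adj z u
  t1 : ∀ t ∈ T, ¬ TypeTwo G z w T t → ∃ B S C, TypeOne G z w T t y B S C

/-- Every two-vertex side has the structure `Missing`. -/
lemma TwoFrag.missing (h : NoFour G) {z w : V} {T A' : Finset V}
    (F : TwoFrag G z w T A') : ∃ y y', Missing G z w T A' y y' := by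
  obtain ⟨t₀, ht₀, hn⟩ := F.exists_not_typeTwo h
  have full : ∀ {z w : V}, TwoFrag G z w T A' → ∀ t ∈ T, G.Adj t z ∨ G.Adj t w := by
    intro z w F t ht
    obtain ⟨x, hx, htx⟩ := (F.sep.full h ht).1
    simp only [Finset.mem_insert, Finset.mem_singleton] at hx
    rcases hx with rfl | rfl
    · exact Or.inl htx
    · exact Or.inr htx
  have aux : ∀ {z w : V}, TwoFrag G z w T A' → ¬ TypeTwo G z w T t₀ → G.Adj t₀ z →
      ∃ y B S B', TypeOne G z w T t₀ y B S B' ∧ t₀ ≠ y := by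
    intro z w F hn ha
    obtain ⟨y, B, S, B', O⟩ := (F.type h ht₀ ha).resolve_left hn
    refine ⟨y, B, S, B', O, ?_⟩
    rintro rfl
    have : t₀ ∈ T ∩ B' := by simp [O.hy]
    exact O.sep.wy t₀ O.mt (Finset.mem_inter.1 this).2
  have hboth : ∃ y y', y ∈ T ∧ y' ∈ T ∧ G.Adj w z ∧ (∀ u ∈ T, u ≠ y → G.Adj w u) ∧ ¬ G.Adj w y ∧
      (∀ u ∈ T, u ≠ y' → G.Adj z u) ∧ ¬ G.Adj z y' := by
    have mem : ∀ {z w t y : V} {B S B' : Finset V}, TypeOne G z w T t y B S B' → y ∈ T := by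
      intro z w t y B S B' O
      have : y ∈ T ∩ B' := by simp [O.hy]
      exact (Finset.mem_inter.1 this).1
    rcases full F t₀ ht₀ with ha | ha
    · obtain ⟨y, B, S, B', O, hne⟩ := aux F hn ha
      obtain ⟨y', C, R, C', O', -⟩ := aux F.symm (fun h' => hn h'.symm) (O.wT t₀ ht₀ hne).symm
      exact ⟨y, y', mem O, mem O', O.wz, O.wT, O.wy, O'.wT, O'.wy⟩
    · obtain ⟨y, B, S, B', O, hne⟩ := aux F.symm (fun h' => hn h'.symm) ha
      obtain ⟨y', C, R, C', O', -⟩ := aux F hn (O.wT t₀ ht₀ hne).symm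
      exact ⟨y', y, mem O', mem O, O'.wz, O'.wT, O'.wy, O.wT, O.wy⟩
  obtain ⟨y, y', hy, hy', hwz, hwT, hwy, hzT, hzy⟩ := hboth
  have hne : y ≠ y' := by
    rintro rfl
    rcases full F y hy with h' | h'
    · exact hzy h'.symm
    · exact hwy h'.symm
  have t2 : ∀ {z w y y' : V}, TwoFrag G z w T A' → y ∈ T → y ≠ y' →
      (∀ u ∈ T, u ≠ y → G.Adj w u) → (∀ u ∈ T, u ≠ y' → G.Adj z u) → TypeTwo G z w T y := by
    intro z w y y' F hy hne hwT hzT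
    refine (F.type h hy (hzT y hy hne).symm).resolve_right ?_
    rintro ⟨y₁, B, S, B', O⟩
    have : y₁ ∈ T ∩ B' := by simp [O.hy]
    rw [Finset.mem_inter] at this
    refine O.wy (hwT y₁ this.1 ?_)
    rintro rfl
    exact O.sep.wy y₁ O.mt this.2
  have ht2 := t2 F hy hne hwT hzT
  have ht2' := (t2 F.symm hy' hne.symm hzT hwT).symm
  refine ⟨y, y', F, hne, ht2, ht2', hwz.symm, hwy, hwT, hzy, hzT, fun t ht htn => ?_⟩
  obtain ⟨y₁, B, S, B', O⟩ := (F.type h ht (hzT t ht (by rintro rfl; exact htn ht2')).symm).resolve_left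
    htn
  have : y₁ ∈ T ∩ B' := by simp [O.hy]
  rw [Finset.mem_inter] at this
  have hyy : y₁ = y := by
    by_contra hne'
    exact O.wy (hwT y₁ this.1 hne')
  subst hyy
  exact ⟨B, S, _, O⟩

/-- A type-one cut at `t` and a type-two cut at `y` cross in one of three ways. Since `y` is the
only neighbour of `z` in `B'`, a nonempty corner inside `B'` needs six boundary vertices; the rest
is the arithmetic of the nine cells. -/
lemma Missing.cross (h : NoFour G) {z w t y y' : V} {T A' B S B' B1 S1 B1' : Finset V}
    (M : Missing G z w T A' y y') (O : TypeOne G z w T t y B S B') (Q1 : FSep G B1 S1 B1')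
    (hz : z ∈ S1) (hw : w ∈ S1) (hy : y ∈ S1) :
    (B'.card = 2 ∧ (S ∩ B1).card = 2 ∧ (S ∩ B1').card = 2 ∧ (S ∩ S1).card = 1) ∨
    (B1' ⊆ S ∧ B1'.card = 2) ∨ (B1 ⊆ S ∧ B1.card = 2) := by
  have hyB : y ∈ T ∩ B' := by simp [O.hy]
  rw [Finset.mem_inter] at hyB
  have hzB : ∀ u ∈ B', G.Adj z u → u = y := by
    intro u hu hzu
    have hT : u ∈ T := M.frag.mem_T hzu.ne' (by rintro rfl; exact O.sep.xy u O.mw hu) (Or.inl hzu)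
    have : u ∈ T ∩ B' := Finset.mem_inter.2 ⟨hT, hu⟩
    rwa [O.hy, Finset.mem_singleton] at this
  have six : ∀ {B1 B1' : Finset V}, FSep G B1 S1 B1' → (B' ∩ B1).card = 0 ∨
      6 ≤ (S ∩ B1).card + (S ∩ S1).card + (B' ∩ S1).card := by
    intro B1 B1' Q1
    rcases O.sep.symm.corner5 h Q1 with h5 | h5
    · exact Or.inl h5
    · by_contra hcon
      push Not at hcon
      obtain ⟨x, hx, hzx⟩ := h.full (O.sep.symm.toVPart.corner Q1.toVPart)
        (Finset.card_pos.1 (by omega)) (card_union_left_ge O.sep.cx)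
        (by rw [O.sep.symm.toVPart.corner_card Q1.toVPart]; omega) (u := z)
        (by simp [O.mz, hz])
      rw [Finset.mem_inter] at hx
      have := hzB x hx.1 hzx
      subst this
      exact Q1.xw x hx.2 hy
  have k1 := O.sep.corner5 h Q1
  have k2 := O.sep.corner5 h Q1.symm
  have k3 := six Q1
  have k4 := six Q1.symm
  obtain ⟨⟨c1, c2, c3⟩, c4, c5, c6⟩ := O.sep.toVPart.cross Q1.toVPart
  have w1 := O.sep.cw
  have w2 := Q1.cw
  have w3 := O.sep.cx
  have w4 := O.sep.cy
  have w5 := Q1.cx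
  have w6 := Q1.cy
  have p1 : 1 ≤ (S ∩ S1).card := Finset.card_pos.2 ⟨z, Finset.mem_inter.2 ⟨O.mz, hz⟩⟩
  have p2 : 1 ≤ (B ∩ S1).card := Finset.card_pos.2 ⟨w, Finset.mem_inter.2 ⟨O.mw, hw⟩⟩
  have p3 : 1 ≤ (B' ∩ S1).card := Finset.card_pos.2 ⟨y, Finset.mem_inter.2 ⟨hyB.2, hy⟩⟩
  have sub : ∀ {X : Finset V}, (S ∩ X).card = X.card → X ⊆ S := by
    intro X hX
    have := Finset.eq_of_subset_of_card_le (Finset.inter_subset_right (s₁ := S) (s₂ := X)) (by omega)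
    rw [← this]; exact Finset.inter_subset_left
  have main : (B'.card = 2 ∧ (S ∩ B1).card = 2 ∧ (S ∩ B1').card = 2 ∧ (S ∩ S1).card = 1) ∨
      ((S ∩ B1').card = B1'.card ∧ B1'.card = 2) ∨ ((S ∩ B1).card = B1.card ∧ B1.card = 2) := by
    omega
  rcases main with h' | h' | h3
  · exact Or.inl h'
  · exact Or.inr (Or.inl ⟨sub h'.1, h'.2⟩)
  · exact Or.inr (Or.inr ⟨sub h3.1, h3.2⟩)

/-- Apart from possibly each other, `y` and `y'` each have exactly one neighbour in `T`. -/
lemma Missing.nbr (h : NoFour G) {z w y y' : V} {T A' : Finset V}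
    (M : Missing G z w T A' y y') :
    (∃ r ∈ T, r ≠ y ∧ r ≠ y' ∧ G.Adj y r ∧ ∀ u ∈ T, u ≠ y' → G.Adj y u → u = r) ∧
    ∃ r ∈ T, r ≠ y ∧ r ≠ y' ∧ G.Adj y' r ∧ ∀ u ∈ T, u ≠ y → G.Adj y' u → u = r := by
  constructor
  · obtain ⟨r, h1, h2, h3, h4⟩ := M.frag.unique_nbr h M.t2' M.t2 M.ne.symm
    exact ⟨r, h1, h3, h2, h4⟩
  · exact M.frag.unique_nbr h M.t2 M.t2' M.ne

/-- When the far side `B'` of a type-one cut at `t` has two vertices `y`, `f`, and `y` is not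
adjacent to `t`, the pair `{y, f}` is itself a two-vertex side, of the cut `S`. Its structure
`Missing` is then known: `f` misses `z` and `y` misses `t`. -/
lemma Missing.far_pair (h : NoFour G) {z w t y y' : V} {T A' B S B' : Finset V}
    (M : Missing G z w T A' y y') (O : TypeOne G z w T t y B S B') (hc : B'.card = 2)
    (hyt : ¬ G.Adj y t) :
    (∃ f ∈ B', f ≠ y ∧ ∀ u ∈ S, u ≠ z → G.Adj f u) ∧
    (∃ r ∈ S, ∀ u ∈ S, u ≠ t → G.Adj z u → u = r) ∧
    ∃ r ∈ S, r ≠ z ∧ r ≠ t ∧ G.Adj t r := by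
  have hyB : y ∈ T ∩ B' := by simp [O.hy]
  rw [Finset.mem_inter] at hyB
  obtain ⟨f, hf, hfy, hB⟩ := exists_other hc hyB.2
  have hB' : B' = {y, f} := by
    ext u; simp only [Finset.mem_insert, Finset.mem_singleton]
    constructor
    · exact hB u
    · rintro (rfl | rfl)
      · exact hyB.2
      · exact hf
  have hfz : ¬ G.Adj f z := by
    intro h'
    have hT : f ∈ T := M.frag.mem_T h'.ne (by rintro rfl; exact O.sep.xy f O.mw hf)
      (Or.inl h'.symm)
    have : f ∈ T ∩ B' := Finset.mem_inter.2 ⟨hT, hf⟩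
    rw [O.hy, Finset.mem_singleton] at this
    exact hfy this
  have F : TwoFrag G y f S B := ⟨by rw [← hB']; exact O.sep.symm, hfy.symm⟩
  obtain ⟨m, m', M'⟩ := F.missing h
  have hm : m = z := by
    by_contra h'
    exact hfz (M'.wT z O.mz (Ne.symm h'))
  have hm' : m' = t := by
    by_contra h'
    exact hyt (M'.zT t O.mt (Ne.symm h'))
  subst hm hm'
  obtain ⟨⟨r, hr, -, -, -, h1⟩, r', hr', h2, h3, h4, -⟩ := M'.nbr h
  exact ⟨⟨f, hf, hfy, M'.wT⟩, ⟨r, hr, h1⟩, r', hr', h2, h3, h4⟩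

end TwoStructure

/-! ### Graphs without vertices of degree four -/

section NoFourEnd
variable [Fintype V] [DecidableEq V] {G : SimpleGraph V}

lemma typeTwo_inter {z w : V} {T : Finset V} {t : V} (h : TypeTwo G z w T t) {b : V}
    (hb : b ∈ T) (hbt : b ≠ t) : ∃ B S B', FSep G B S B' ∧ z ∈ S ∧ w ∈ S ∧ t ∈ S ∧ b ∈ B ∧
      (∀ u ∈ T, u ∈ S → u = t) ∧ (T ∩ B).card = 2 ∧ (T ∩ B').card = 2 := by
  obtain ⟨B, S, B', Q, h1, h2, h3, h4, h5⟩ := h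
  have ht : t ∈ T ∩ S := by simp [h3]
  rw [Finset.mem_inter] at ht
  have h6 : ∀ u ∈ T, u ∈ S → u = t := fun u hu huS => by
    have : u ∈ T ∩ S := Finset.mem_inter.2 ⟨hu, huS⟩
    rwa [h3, Finset.mem_singleton] at this
  rcases Q.cov b with h' | h' | h'
  · exact ⟨B, S, B', Q, h1, h2, ht.2, h', h6, h4, h5⟩
  · exact absurd (h6 b hb h') hbt
  · exact ⟨B', S, B, Q.symm, h1, h2, ht.2, h', h6, h5, h4⟩

/-- First configuration: a vertex `r` of `T` adjacent to both `y` and `y'`. -/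
lemma Missing.false_one (h : NoFour G) {z w y y' : V} {T A' : Finset V}
    (M : Missing G z w T A' y y') {r k : V} (hr : r ∈ T) (hry : r ≠ y) (hry' : r ≠ y')
    (ay : G.Adj r y) (ay' : G.Adj r y') (az : G.Adj r z) (aw : G.Adj r w)
    (hN : ∀ u, G.Adj r u → u = z ∨ u = w ∨ u = y ∨ u = y' ∨ u = k)
    (hT : ∀ s ∈ T, s ≠ y → s ≠ y' → s ≠ r → ¬ G.Adj s y ∧ ¬ G.Adj s y' ∧ ¬ G.Adj s r) : False := by
  have hyT := M.t2.mem
  have hy'T := M.t2'.mem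
  have hzT : z ∉ T := M.frag.sep.xw z (by simp)
  have hwT : w ∉ T := M.frag.sep.xw w (by simp)
  have key : ∀ s ∈ T, s ≠ y → s ≠ y' → s ≠ r → ∀ t ∈ T, t ≠ y → t ≠ y' → t ≠ r → s ≠ t →
      G.Adj k s ∧ ¬ G.Adj k t := by
    intro s hs hsy hsy' hsr t ht hty hty' htr hst
    obtain ⟨B, S, B', O⟩ := M.t1 s hs fun h2 =>
      h2.no_path hyT hr hy'T hsy.symm hsr.symm hsy'.symm M.ne ay.symm ay'
    have hyB : y ∈ T ∩ B' := by simp [O.hy]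
    rw [Finset.mem_inter] at hyB
    have hrS : r ∈ S := by
      rcases O.sep.cov r with h' | h' | h'
      · exact absurd ay (O.sep.na r h' y hyB.2)
      · exact h'
      · exact absurd aw.symm (O.sep.na w O.mw r h')
    obtain ⟨B1, S1, B1', Q1, hz, hw, hy, hy'1, hTS, hc1, hc2⟩ := typeTwo_inter M.t2 hy'T M.ne.symm
    have hr1 : r ∈ B1 := by
      rcases Q1.cov r with h' | h' | h'
      · exact h'
      · exact absurd (hTS r hr h') hry
      · exact absurd ay'.symm (Q1.na y' hy'1 r h')
    obtain ⟨x, hx, hxy, hall⟩ := exists_other hc1 (Finset.mem_inter.2 ⟨hy'T, hy'1⟩)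
    have hxr : r = x := (hall r (Finset.mem_inter.2 ⟨hr, hr1⟩)).resolve_left hry'
    subst hxr
    have hB1' : ∀ u ∈ T, u ≠ y → u ≠ y' → u ≠ r → u ∈ B1' := by
      intro u hu h1 h2 h3
      rcases Q1.cov u with h' | h' | h'
      · rcases hall u (Finset.mem_inter.2 ⟨hu, h'⟩) with h'' | h''
        · exact absurd h'' h2
        · exact absurd h'' h3
      · exact absurd (hTS u hu h') h1
      · exact h'
    have hs1 := hB1' s hs hsy hsy' hsr
    have ht1 := hB1' t ht hty hty' htr
    rcases M.cross h O Q1 hz hw hy with ⟨hc, -⟩ | ⟨-, hc⟩ | ⟨-, hc⟩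
    · have hsy0 := (hT s hs hsy hsy' hsr).1
      obtain ⟨⟨f, hf, hfy, hfS⟩, ⟨ρ, -, hρ⟩, -⟩ := M.far_pair h O hc fun h' => hsy0 h'.symm
      have hrz : r ≠ z := by rintro rfl; exact hzT hr
      have hsz : s ≠ z := by rintro rfl; exact hzT hs
      have hfs := hfS s O.mt hsz
      have hfk : f = k := by
        rcases hN f (hfS r hrS hrz).symm with rfl | rfl | rfl | rfl | h'
        · exact absurd hf (O.sep.wy _ O.mz)
        · exact absurd hf (O.sep.xy _ O.mw)
        · exact absurd rfl hfy
        · exact absurd hfs.symm (hT s hs hsy hsy' hsr).2.1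
        · exact h'
      subst hfk
      refine ⟨hfs, fun hft => ?_⟩
      rcases O.sep.cov t with h' | h' | h'
      · exact O.sep.na t h' f hf hft.symm
      · have e1 := hρ t h' (Ne.symm hst) (M.zT t ht hty')
        have e2 := hρ r hrS hsr.symm az.symm
        exact htr (e1.trans e2.symm)
      · have : t ∈ T ∩ B' := Finset.mem_inter.2 ⟨ht, h'⟩
        rw [O.hy, Finset.mem_singleton] at this
        exact hty this
    · exfalso
      obtain ⟨v, hv, -, hall'⟩ := exists_other hc hs1
      have htv := (hall' t ht1).resolve_left (Ne.symm hst)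
      subst htv
      obtain ⟨u, hu, hyu⟩ := (Q1.full h hy).2
      rcases hall' u hu with rfl | rfl
      · exact (hT u hs hsy hsy' hsr).1 hyu.symm
      · exact (hT u ht hty hty' htr).1 hyu.symm
    · exfalso
      obtain ⟨v, hv, -, hall'⟩ := exists_other hc hy'1
      have hrv := (hall' r hr1).resolve_left hry'
      subst hrv
      have hB : B1 = {y', r} := by
        ext u; simp only [Finset.mem_insert, Finset.mem_singleton]
        constructor
        · exact hall' u
        · rintro (rfl | rfl) <;> assumption
      have F : TwoFrag G y' r S1 B1' := ⟨by rw [← hB]; exact Q1, hry'.symm⟩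
      obtain ⟨m, m', M'⟩ := F.missing h
      have hm' : m' = z := by
        by_contra h'
        exact M.zy (M'.zT z hz (Ne.symm h')).symm
      subst hm'
      obtain ⟨ρ, -, -, -, -, hρ⟩ := (M'.nbr h).2
      have e1 := hρ w hw (by rintro rfl; exact M'.wy aw) M.zw
      have e2 := hρ y hy (by rintro rfl; exact M'.wy ay) (M.zT y hyT M.ne)
      exact hwT (by rw [e1, ← e2]; exact hyT)
  obtain ⟨s, hs, t, ht, hst⟩ := Finset.one_lt_card.1 (by
    have h5 := Finset.le_card_sdiff {y, y', r} T
    have h6 := Finset.card_le_three (a := y) (b := y') (c := r)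
    have := M.frag.sep.cw
    omega : 1 < (T \ {y, y', r}).card)
  simp only [Finset.mem_sdiff, Finset.mem_insert, Finset.mem_singleton, not_or] at hs ht
  exact (key s hs.1 hs.2.1 hs.2.2.1 hs.2.2.2 t ht.1 ht.2.1 ht.2.2.1 ht.2.2.2 hst).2
    (key t ht.1 ht.2.1 ht.2.2.1 ht.2.2.2 s hs.1 hs.2.1 hs.2.2.1 hs.2.2.2 hst.symm).1

/-- Second configuration: `T` consists of `y`, `y'`, a neighbour of each, and an isolated `a`. -/
lemma Missing.false_two (h : NoFour G) {z w y y' : V} {T A' : Finset V}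
    (M : Missing G z w T A' y y') {b c a : V} (hb : b ∈ T) (hc : c ∈ T) (ha : a ∈ T)
    (hby : b ≠ y) (hby' : b ≠ y') (hcy : c ≠ y) (hcy' : c ≠ y') (hbc : b ≠ c) (hay : a ≠ y)
    (hay' : a ≠ y') (hab : a ≠ b) (hac : a ≠ c)
    (hT : ∀ u ∈ T, u = y ∨ u = y' ∨ u = b ∨ u = c ∨ u = a)
    (aby' : G.Adj b y') (acy : G.Adj c y) (nay : ¬ G.Adj a y) (nay' : ¬ G.Adj a y')
    (nab : ¬ G.Adj a b) (nac : ¬ G.Adj a c) : False := by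
  have hyT := M.t2.mem
  have hy'T := M.t2'.mem
  have hna : ¬ TypeTwo G z w T a := by
    intro h2
    obtain ⟨u, hu, -, -, hau, -⟩ := M.frag.unique_nbr h M.t2 h2 hay.symm
    rcases hT u hu with rfl | rfl | rfl | rfl | rfl
    · exact nay hau
    · exact nay' hau
    · exact nab hau
    · exact nac hau
    · exact hau.ne rfl
  obtain ⟨B, S, B', O⟩ := M.t1 a ha hna
  have hyB : y ∈ T ∩ B' := by simp [O.hy]
  rw [Finset.mem_inter] at hyB
  have hcS : c ∈ S := by
    rcases O.sep.cov c with h' | h' | h'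
    · exact absurd acy (O.sep.na c h' y hyB.2)
    · exact h'
    · exact absurd (M.wT c hc hcy) (O.sep.na w O.mw c h')
  obtain ⟨B1, S1, B1', Q1, hz, hw, hy, hy'1, hTS, hc1, hc2⟩ := typeTwo_inter M.t2 hy'T M.ne.symm
  have hb1 : b ∈ B1 := by
    rcases Q1.cov b with h' | h' | h'
    · exact h'
    · exact absurd (hTS b hb h') hby
    · exact absurd aby'.symm (Q1.na y' hy'1 b h')
  obtain ⟨x, hx, hxy, hall⟩ := exists_other hc1 (Finset.mem_inter.2 ⟨hy'T, hy'1⟩)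
  have hxb : b = x := (hall b (Finset.mem_inter.2 ⟨hb, hb1⟩)).resolve_left hby'
  subst hxb
  have hB1' : ∀ u ∈ T, u ≠ y → u ≠ y' → u ≠ b → u ∈ B1' := by
    intro u hu h1 h2 h3
    rcases Q1.cov u with h' | h' | h'
    · rcases hall u (Finset.mem_inter.2 ⟨hu, h'⟩) with h'' | h''
      · exact absurd h'' h2
      · exact absurd h'' h3
    · exact absurd (hTS u hu h') h1
    · exact h'
  have hc1' := hB1' c hc hcy hcy' hbc.symm
  have ha1' := hB1' a ha hay hay' hab
  rcases M.cross h O Q1 hz hw hy with ⟨hcB, -, hcS', hc1''⟩ | ⟨-, hcB⟩ | ⟨hsub, hcB⟩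
  · obtain ⟨-, -, ρ, hρ, hρz, hρa, haρ⟩ := M.far_pair h O hcB fun h' => nay h'.symm
    obtain ⟨v, hv, hva, hall'⟩ := exists_other hcS' (Finset.mem_inter.2 ⟨O.mt, ha1'⟩)
    have hcv := (hall' c (Finset.mem_inter.2 ⟨hcS, hc1'⟩)).resolve_left hac.symm
    subst hcv
    rcases Q1.cov ρ with h' | h' | h'
    · exact Q1.na ρ h' a ha1' haρ.symm
    · exact hρz (Finset.card_le_one.1 hc1''.le ρ (Finset.mem_inter.2 ⟨hρ, h'⟩) z
        (Finset.mem_inter.2 ⟨O.mz, hz⟩))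
    · rcases hall' ρ (Finset.mem_inter.2 ⟨hρ, h'⟩) with rfl | rfl
      · exact hρa rfl
      · exact nac haρ
  · obtain ⟨v, hv, hva, hall'⟩ := exists_other hcB ha1'
    have hcv := (hall' c hc1').resolve_left hac.symm
    subst hcv
    have hB : B1' = {a, c} := by
      ext u; simp only [Finset.mem_insert, Finset.mem_singleton]
      constructor
      · exact hall' u
      · rintro (rfl | rfl) <;> assumption
    have F : TwoFrag G a c S1 B1 := ⟨by rw [← hB]; exact Q1.symm, hac⟩
    obtain ⟨m, m', M'⟩ := F.missing h
    exact nac M'.zw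
  · obtain ⟨u, hu⟩ := O.ne
    rw [Finset.mem_inter] at hu
    rcases hT u hu.1 with rfl | rfl | rfl | rfl | rfl
    · exact O.sep.xy _ hu.2 hyB.2
    · exact O.sep.xw _ hu.2 (hsub hy'1)
    · exact O.sep.xw _ hu.2 (hsub hb1)
    · exact O.sep.xw _ hu.2 hcS
    · exact O.sep.xw _ hu.2 O.mt

/-- A graph without vertices of degree four in which every edge lies in a nontrivial `5`-cut has
no edge. -/
lemma NoFour.false (h : NoFour G) {x y : V} (hxy : G.Adj x y) : False := by
  obtain ⟨A, T, A', P, hA⟩ := h.exists_two hxy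
  obtain ⟨z, w, hzw, rfl⟩ := Finset.card_eq_two.1 hA
  have F : TwoFrag G z w T A' := ⟨P, hzw⟩
  obtain ⟨y, y', M⟩ := F.missing h
  rcases F.two_types h M.t2 M.t2' M.ne with ⟨r, k, hr, h1, h2, h3, h4, h5, h6, h7, h8⟩ |
    ⟨b, c, a, hb, hc, ha, h1, h2, h3, h4, h5, h6, h7, h8, h9, h10, h11, h12, h13, h14, h15, h16, h17,
      h18, h19⟩
  · exact M.false_one h hr h1 h2 h3 h4 h5 h6 h7 h8
  · exact M.false_two h hb hc ha h1 h2 h3 h4 h5 h6 h7 h8 h9 h10 h11 h12 h16 h17 h18 h19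
end NoFourEnd

/-! ### Cuts through a vertex of degree four -/

section DegreeFour
variable [Fintype V] [DecidableEq V] {G : SimpleGraph V}

/-- Every vertex of a nontrivial `5`-cut has neighbours on both sides. -/
lemma Critical.full (C : Critical G) {X W Y : Finset V} (P : FSep G X W Y) {u : V} (hu : u ∈ W) :
    (∃ x ∈ X, G.Adj u x) ∧ ∃ y ∈ Y, G.Adj u y := by
  have aux : ∀ {X Y : Finset V}, FSep G X W Y → ∃ x ∈ X, G.Adj u x := by
    intro X Y P
    by_contra hcon
    push Not at hcon
    have P' := P.toVPart.shrink {u} (by simpa using hu) (by simpa using hcon)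
    have hc := P.cx
    obtain ⟨d, hd, -⟩ := small_cut C.quasi P' (Finset.card_pos.1 (by omega))
      (card_union_left_ge P.cy) (by
        rw [Finset.sdiff_singleton_eq_erase, Finset.card_erase_of_mem hu, P.cw])
    rw [hd, Finset.card_singleton] at hc
    omega
  exact ⟨aux P, aux P.symm⟩

/-- A vertex of degree four within distance two of `v` is `v`. -/
lemma Critical.near (C : Critical G) {v d x : V} (hv : (nb G v).card = 4)
    (hd : (nb G d).card = 4) (hvx : G.Adj v x) (hdx : G.Adj d x) : d = v := by
  by_contra hne
  exact (C.far d v hd hv hne).2 x hdx hvx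

lemma Critical.not_adj (C : Critical G) {v d : V} (hv : (nb G v).card = 4)
    (hd : (nb G d).card = 4) (h : G.Adj d v) : False :=
  (C.far d v hd hv h.ne).1 h

/-- The edge `xy` lies in a nontrivial `5`-cut when `x` is a neighbour of a vertex `v` of degree
four and `y` is not: `v` is then the only vertex of degree four that `x` can see. -/
lemma Critical.edge_near (C : Critical G) {v x y : V} (hv : (nb G v).card = 4)
    (hvx : G.Adj v x) (hvy : ¬ G.Adj v y) (hxy : G.Adj x y) :
    ∃ X W Y, FSep G X W Y ∧ x ∈ W ∧ y ∈ W := by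
  refine C.edge x y hxy fun d hd hx hy => ?_
  rw [mem_nb] at hx hy
  have := C.near hv hd hvx hx
  subst this
  exact hvy hy

/-- An edge at a vertex of degree four lies in a nontrivial `5`-cut. -/
lemma Critical.edge_self (C : Critical G) {v x : V} (hv : (nb G v).card = 4)
    (hvx : G.Adj v x) : ∃ X W Y, FSep G X W Y ∧ v ∈ W ∧ x ∈ W := by
  refine C.edge v x hvx fun d hd hx _ => ?_
  rw [mem_nb] at hx
  exact C.not_adj hv hd hx

/-- Moving `M` from the side `X` into the cut and then the vertices of `U`, which see nothing
of the rest of `X`, to the other side. -/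
lemma VPart.exchange {X W Y : Finset V} (P : VPart G X W Y) (M U : Finset V) (hM : M ⊆ X)
    (hU : U ⊆ W ∪ M) (h : ∀ u ∈ U, ∀ x ∈ X, x ∉ M → ¬ G.Adj u x) :
    VPart G (X \ M) ((W ∪ M) \ U) (Y ∪ U) := by
  refine ⟨fun v => ?_, fun v h' => ?_, fun v h' => ?_, fun v h' => ?_, fun x hx y hy hxy => ?_⟩
  · have := P.cov v; simp only [Finset.mem_union, Finset.mem_sdiff]; tauto
  · have := P.xw v; simp only [Finset.mem_union, Finset.mem_sdiff] at h' ⊢; tauto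
  · have h1 := @hU v; have := P.xw v; have := P.xy v
    simp only [Finset.mem_union, Finset.mem_sdiff] at h' h1 ⊢; tauto
  · have := @hM v; have := P.xy v; have := P.wy v
    simp only [Finset.mem_union, Finset.mem_sdiff] at h' ⊢; tauto
  · rw [Finset.mem_sdiff] at hx
    rcases Finset.mem_union.1 hy with hy | hy
    · exact P.na x hx.1 y hy hxy
    · exact h y hy x hx.1 hx.2 hxy.symm

/-- The exchange of `M` for a larger set `U` yields a cut with at most four vertices, which isolates
a vertex `d` of degree four. -/
lemma Critical.exchange_cut (C : Critical G) {X W Y : Finset V} (P : FSep G X W Y)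
    (M U : Finset V) (hM : M ⊆ X) (hU : U ⊆ W) (hc : M.card + 1 ≤ U.card)
    (h : ∀ u ∈ U, ∀ x ∈ X, x ∉ M → ¬ G.Adj u x) (hne : (X \ M).Nonempty) :
    ∃ d, X \ M = {d} ∧ (nb G d).card = 4 ∧ nb G d = (W ∪ M) \ U := by
  have hU' : U ⊆ W ∪ M := hU.trans Finset.subset_union_left
  obtain ⟨d, h1, h2, h3⟩ := small_cut C.quasi (P.toVPart.exchange M U hM hU' h) hne
    (card_union_left_ge P.cy) (by
      have := P.cw
      have := Finset.card_union_le W M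
      rw [Finset.card_sdiff_of_subset hU']
      omega)
  exact ⟨d, h1, by rw [h3, h2], h3⟩

/-- If `v` has a single neighbour `z` in the side `A`, any nontrivial `5`-cut through `v` and `z`
contains `A`, which has only two vertices, and the remaining cells of the crossing are determined:
a corner inside `A` or containing `v` in its boundary can only be small near a vertex of degree
four, which would be too close to `v`. -/
lemma Critical.single_nbr (C : Critical G) {v z : V} (hv : (nb G v).card = 4)
    {A T A' B S B' : Finset V} (P : FSep G A T A') (Q : FSep G B S B') (hvT : v ∈ T)
    (hzA : z ∈ A) (hvz : G.Adj v z) (hu : ∀ u ∈ A, G.Adj v u → u = z) (hvS : v ∈ S)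
    (hzS : z ∈ S) :
    A ⊆ S ∧ A.card = 2 ∧ (T ∩ S).card = 1 ∧ (T ∩ B).card = 2 ∧ (T ∩ B').card = 2 ∧
      (A' ∩ S).card = 2 := by
  have five : ∀ {A A' B B'}, FSep G A T A' → FSep G B S B' → ((A ∩ B).card = 0 ∨
      5 ≤ (T ∩ B).card + (T ∩ S).card + (A ∩ S).card) := by
    intro A A' B B' P Q
    by_cases h0 : (A ∩ B).card = 0
    · exact Or.inl h0
    · right
      rw [← P.toVPart.corner_card Q.toVPart]
      by_contra hlt
      obtain ⟨d, -, h1, h2⟩ := small_cut C.quasi (P.toVPart.corner Q.toVPart)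
        (Finset.card_pos.1 (by omega)) (card_union_left_ge P.cy) (by omega)
      refine C.not_adj hv (d := d) (by rw [h2, h1]) ?_
      rw [← mem_nb, h2]
      simp [hvT, hvS]
  have six : ∀ {B B'}, FSep G B S B' → ((A ∩ B).card = 0 ∨
      6 ≤ (T ∩ B).card + (T ∩ S).card + (A ∩ S).card) := by
    intro B B' Q
    by_cases h0 : (A ∩ B).card = 0
    · exact Or.inl h0
    · right
      rw [← P.toVPart.corner_card Q.toVPart]
      by_contra hlt
      have hvm : v ∈ T ∩ B ∪ T ∩ S ∪ A ∩ S := by simp [hvT, hvS]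
      obtain ⟨d, hd0, h1, h2⟩ := small_cut C.quasi ((P.toVPart.corner Q.toVPart).shrink {v}
        (by simpa using hvm) (by
          intro u hu' x hx hux
          rw [Finset.mem_singleton] at hu'
          subst hu'
          rw [Finset.mem_inter] at hx
          exact Q.xw x hx.2 (hu x hx.1 hux ▸ hzS)))
        (Finset.card_pos.1 (by omega)) (card_union_left_ge (card_union_left_ge P.cy)) (by
          rw [Finset.sdiff_singleton_eq_erase, Finset.card_erase_of_mem hvm]; omega)
      have hdz : z ∈ nb G d := by
        rw [h2]; simp [hzA, hzS, hvz.ne']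
      have hdv := C.near hv (d := d) (by rw [h2, h1]) hvz (mem_nb.1 hdz)
      have hd : d ∈ A ∩ B := by rw [hd0]; simp
      rw [hdv, Finset.mem_inter] at hd
      exact P.xw v hd.1 hvT
  have k1 := six Q
  have k2 := six Q.symm
  have k3 := five P.symm Q
  have k4 := five P.symm Q.symm
  obtain ⟨⟨c1, c2, c3⟩, c4, c5, c6⟩ := P.toVPart.cross Q.toVPart
  have w1 := P.cw
  have w2 := Q.cw
  have w3 := P.cx
  have w4 := P.cy
  have w5 := Q.cx
  have w6 := Q.cy
  have p1 : 1 ≤ (T ∩ S).card := Finset.card_pos.2 ⟨v, Finset.mem_inter.2 ⟨hvT, hvS⟩⟩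
  have p2 : 1 ≤ (A ∩ S).card := Finset.card_pos.2 ⟨z, Finset.mem_inter.2 ⟨hzA, hzS⟩⟩
  have main : (A ∩ S).card = A.card ∧ A.card = 2 ∧ (T ∩ S).card = 1 ∧ (T ∩ B).card = 2 ∧
      (T ∩ B').card = 2 ∧ (A' ∩ S).card = 2 := by omega
  refine ⟨?_, main.2⟩
  have := Finset.eq_of_subset_of_card_le (Finset.inter_subset_left (s₁ := A) (s₂ := S)) (by omega)
  rw [← this]; exact Finset.inter_subset_right

/-- A nontrivial `5`-cut through an edge at `v` has a side with exactly one neighbour of `v`. -/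
lemma Critical.one_side (C : Critical G) {v x : V} (hv : (nb G v).card = 4)
    {X W Y : Finset V} (P : FSep G X W Y) (hvW : v ∈ W) (hx : x ∈ W) (hvx : G.Adj v x) :
    ∃ A A' z, FSep G A W A' ∧ z ∈ A ∧ G.Adj v z ∧ ∀ u ∈ A, G.Adj v u → u = z := by
  have hc := P.toVPart.card (nb G v)
  obtain ⟨⟨a, ha, hva⟩, b, hb, hvb⟩ := C.full P hvW
  have h1 : 0 < (nb G v ∩ X).card := Finset.card_pos.2 ⟨a, by simp [mem_nb, ha, hva]⟩
  have h2 : 0 < (nb G v ∩ Y).card := Finset.card_pos.2 ⟨b, by simp [mem_nb, hb, hvb]⟩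
  have h3 : 0 < (nb G v ∩ W).card := Finset.card_pos.2 ⟨x, by simp [mem_nb, hx, hvx]⟩
  have aux : ∀ {X : Finset V} {a : V}, (nb G v ∩ X).card = 1 → a ∈ X → G.Adj v a →
      ∀ u ∈ X, G.Adj v u → u = a := fun h' ha hva u hu hvu =>
    Finset.card_le_one.1 h'.le u (by simp [mem_nb, hu, hvu]) _ (by simp [mem_nb, ha, hva])
  rcases (by omega : (nb G v ∩ X).card = 1 ∨ (nb G v ∩ Y).card = 1) with h' | h'
  · exact ⟨X, Y, a, P, ha, hva, aux h' ha hva⟩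
  · exact ⟨Y, X, b, P.symm, hb, hvb, aux h' hb hvb⟩

/-- The second vertex of a two-vertex side with a single neighbour of `v`. -/
lemma Critical.second (C : Critical G) {v z w z' : V} (hv : (nb G v).card = 4)
    {T A' : Finset V} (P : FSep G {z, w} T A') (hvT : v ∈ T) (hvz : G.Adj v z)
    (hvw : ¬ G.Adj v w) (hz'T : z' ∈ T) (hvz' : G.Adj v z') :
    G.Adj w z ∧ ∀ u ∈ T, u ≠ v → G.Adj w u := by
  have hzT : z ∉ T := P.xw z (by simp)
  have hwT : w ∉ T := P.xw w (by simp)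
  have hsub : nb G w ⊆ insert z (T.erase v) := by
    intro u hu
    rw [mem_nb] at hu
    simp only [Finset.mem_insert, Finset.mem_erase]
    rcases P.cov u with h' | h' | h'
    · simp only [Finset.mem_insert, Finset.mem_singleton] at h'
      rcases h' with h' | h'
      · exact Or.inl h'
      · exact absurd h' hu.ne'
    · refine Or.inr ⟨?_, h'⟩
      rintro rfl
      exact hvw hu.symm
    · exact absurd hu (P.na w (by simp) u h')
  have hcard : (insert z (T.erase v)).card = 5 := by
    rw [Finset.card_insert_of_notMem (fun h' => hzT (Finset.mem_of_mem_erase h')),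
      Finset.card_erase_of_mem hvT, P.cw]
  have hwv : w ≠ v := by rintro rfl; exact hwT hvT
  have h5 : (nb G w).card ≠ 4 := by
    intro h4
    have hz : z ∉ nb G w := fun h' => hwv (C.near hv h4 hvz (mem_nb.1 h'))
    have hz' : z' ∉ nb G w := fun h' => hwv (C.near hv h4 hvz' (mem_nb.1 h'))
    have hzz : z ≠ z' := by rintro rfl; exact hzT hz'T
    have h6 : nb G w ⊆ (insert z (T.erase v)) \ {z, z'} := by
      intro u hu
      rw [Finset.mem_sdiff]
      refine ⟨hsub hu, ?_⟩
      simp only [Finset.mem_insert, Finset.mem_singleton]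
      rintro (rfl | rfl)
      · exact hz hu
      · exact hz' hu
    have h7 := Finset.card_le_card h6
    rw [Finset.card_sdiff_of_subset, Finset.card_pair hzz] at h7
    · omega
    · intro u hu
      simp only [Finset.mem_insert, Finset.mem_singleton, Finset.mem_erase] at hu ⊢
      rcases hu with rfl | rfl
      · exact Or.inl rfl
      · exact Or.inr ⟨hvz'.ne', hz'T⟩
  have heq := Finset.eq_of_subset_of_card_le hsub (by have := C.deg w; omega)
  constructor
  · rw [← mem_nb, heq]; simp
  · intro u hu huv
    rw [← mem_nb, heq]; simp [hu, huv]
end DegreeFour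

/-! ### The configuration at a vertex of degree four -/

section DegreeFourEnd
variable [Fintype V] [DecidableEq V] {G : SimpleGraph V}

/-- Two crossing nontrivial `5`-cuts through a vertex `v` of degree four, each cutting off an edge
(`zw`, respectively `z'w'`) that lies in the other cut; `r₁, r₂` and `g₁, g₂` are the remaining
vertices of the two cuts. -/
structure Config (G : SimpleGraph V) (v z w z' w' r₁ r₂ g₁ g₂ : V) (A' B' : Finset V) :
    Prop where
  hv : (nb G v).card = 4
  P : FSep G {z, w} {v, z', w', r₁, r₂} A'
  Q : FSep G {z', w'} {v, z, w, g₁, g₂} B'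
  nodup : [v, z, w, z', w', r₁, r₂, g₁, g₂].Nodup
  vz : G.Adj v z
  vz' : G.Adj v z'
  vw : ¬ G.Adj v w
  vw' : ¬ G.Adj v w'
  wz : G.Adj w z
  wz' : G.Adj w z'
  ww' : G.Adj w w'
  wr₁ : G.Adj w r₁
  wr₂ : G.Adj w r₂
  wz'' : G.Adj w' z'
  wz''' : G.Adj w' z
  wg₁ : G.Adj w' g₁
  wg₂ : G.Adj w' g₂
  g₁A : g₁ ∈ A'
  g₂A : g₂ ∈ A'
  r₁B : r₁ ∈ B'
  r₂B : r₂ ∈ B'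
  nz : ∀ u, G.Adj z u → u = w ∨ u = v ∨ u = z' ∨ u = w' ∨ u = r₁ ∨ u = r₂
  nw : ∀ u, G.Adj w u → u = z ∨ u = z' ∨ u = w' ∨ u = r₁ ∨ u = r₂
  nz' : ∀ u, G.Adj z' u → u = w' ∨ u = v ∨ u = z ∨ u = w ∨ u = g₁ ∨ u = g₂
  nw' : ∀ u, G.Adj w' u → u = z' ∨ u = z ∨ u = w ∨ u = g₁ ∨ u = g₂

/-- The two cuts of a configuration play symmetric roles. -/
lemma Config.swap {v z w z' w' r₁ r₂ g₁ g₂ : V} {A' B' : Finset V}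
    (K : Config G v z w z' w' r₁ r₂ g₁ g₂ A' B') :
    Config G v z' w' z w g₁ g₂ r₁ r₂ B' A' := by
  refine ⟨K.hv, K.Q, K.P, ?_, K.vz', K.vz, K.vw', K.vw, K.wz'', K.wz''', K.ww'.symm, K.wg₁, K.wg₂,
    K.wz, K.wz', K.wr₁, K.wr₂, K.r₁B, K.r₂B, K.g₁A, K.g₂A, K.nz', K.nw', K.nz, K.nw⟩
  have := K.nodup
  simp only [List.nodup_cons, List.mem_cons, List.not_mem_nil, or_false] at this ⊢
  grind

lemma Config.flip {v z w z' w' r₁ r₂ g₁ g₂ : V} {A' B' : Finset V}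
    (K : Config G v z w z' w' r₁ r₂ g₁ g₂ A' B') :
    Config G v z w z' w' r₂ r₁ g₁ g₂ A' B' := by
  have hP : ({v, z', w', r₂, r₁} : Finset V) = {v, z', w', r₁, r₂} := by
    rw [Finset.pair_comm r₂]
  refine ⟨K.hv, hP ▸ K.P, K.Q, ?_, K.vz, K.vz', K.vw, K.vw', K.wz, K.wz', K.ww', K.wr₂, K.wr₁,
    K.wz'', K.wz''', K.wg₁, K.wg₂, K.g₁A, K.g₂A, K.r₂B, K.r₁B, ?_, ?_, K.nz', K.nw'⟩
  · have := K.nodup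
    simp only [List.nodup_cons, List.mem_cons, List.not_mem_nil, or_false] at this ⊢
    grind
  · intro u hu; have := K.nz u hu; tauto
  · intro u hu; have := K.nw u hu; tauto

lemma eq_five {W : Finset V} {a b c : V} (hW : W.card = 5) {N : Finset V} (hN : N.card = 2)
    (hd : Disjoint N {a, b, c}) (hNW : N ⊆ W) (ha : a ∈ W) (hb : b ∈ W) (hc : c ∈ W)
    (hab : a ≠ b) (hac : a ≠ c) (hbc : b ≠ c) :
    ∃ r s, r ≠ s ∧ N = {r, s} ∧ W = {a, b, c, r, s} := by
  obtain ⟨r, s, hrs, rfl⟩ := Finset.card_eq_two.1 hN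
  refine ⟨r, s, hrs, rfl, (Finset.eq_of_subset_of_card_le (s := {a, b, c, r, s}) ?_ ?_).symm⟩
  · intro u hu
    have := @hNW u
    simp only [Finset.mem_insert, Finset.mem_singleton] at hu this
    rcases hu with rfl | rfl | rfl | hu
    · exact ha
    · exact hb
    · exact hc
    · exact this hu
  · have hu : ({a, b, c, r, s} : Finset V) = {a, b, c} ∪ {r, s} := by
      ext; simp only [Finset.mem_insert, Finset.mem_singleton, Finset.mem_union]; tauto
    rw [hu, Finset.card_union_of_disjoint hd.symm, Finset.card_pair hrs,
      Finset.card_eq_three.2 ⟨a, b, c, hab, hac, hbc, rfl⟩, hW]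

lemma FSep.nbr {a b c d e f g u : V} {A' : Finset V} (P : FSep G {a, b} {c, d, e, f, g} A')
    (hu : G.Adj a u) : u = b ∨ u = c ∨ u = d ∨ u = e ∨ u = f ∨ u = g := by
  have h0 := hu.ne'
  have h1 := P.cov u
  have h2 : u ∉ A' := fun h => P.na a (by simp) u h hu
  simp only [Finset.mem_insert, Finset.mem_singleton] at h1
  tauto

lemma FSep.nbr' {a b c d e f g u : V} {A' : Finset V} (P : FSep G {b, a} {c, d, e, f, g} A')
    (hu : G.Adj a u) (hc : ¬ G.Adj c a) : u = b ∨ u = d ∨ u = e ∨ u = f ∨ u = g := by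
  rw [Finset.pair_comm] at P
  rcases P.nbr hu with h | rfl | h | h | h
  · exact Or.inl h
  · exact absurd hu.symm hc
  all_goals tauto

/-- Every vertex of degree four gives rise to such a configuration. -/
lemma Critical.config (C : Critical G) {v : V} (hv : (nb G v).card = 4) :
    ∃ z w z' w' r₁ r₂ g₁ g₂ A' B', Config G v z w z' w' r₁ r₂ g₁ g₂ A' B' := by
  obtain ⟨x, hx⟩ := Finset.card_pos.1 (by omega : 0 < (nb G v).card)
  rw [mem_nb] at hx
  obtain ⟨X, T, Y, P₀, hvT, hxT⟩ := C.edge_self hv hx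
  obtain ⟨A, A', z, P, hzA, hvz, huz⟩ := C.one_side hv P₀ hvT hxT hx
  obtain ⟨X₁, S, Y₁, Q₀, hvS, hzS⟩ := C.edge_self hv hvz
  obtain ⟨B, B', z', Q, hzB, hvz', huz'⟩ := C.one_side hv Q₀ hvS hzS hvz
  obtain ⟨hAS, hA2, hTS, hTB, hTB', hAS'⟩ := C.single_nbr hv P Q hvT hzA hvz huz hvS hzS
  obtain ⟨X₂, R, Y₂, R₀, hvR, hzR⟩ := C.edge_self hv hvz'
  obtain ⟨-, hB2, -⟩ := C.single_nbr hv Q R₀ hvS hzB hvz' huz' hvR hzR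
  have hBT : B ⊆ T := by
    have := Finset.eq_of_subset_of_card_le (Finset.inter_subset_right (s₁ := T) (s₂ := B))
      (by omega)
    rw [← this]; exact Finset.inter_subset_left
  obtain ⟨w, hwA, hwz, hA⟩ := exists_other hA2 hzA
  obtain ⟨w', hwB, hwz', hB⟩ := exists_other hB2 hzB
  have hAe : A = {z, w} := by
    ext u; simp only [Finset.mem_insert, Finset.mem_singleton]
    exact ⟨hA u, by rintro (rfl | rfl) <;> assumption⟩
  have hBe : B = {z', w'} := by
    ext u; simp only [Finset.mem_insert, Finset.mem_singleton]
    exact ⟨hB u, by rintro (rfl | rfl) <;> assumption⟩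
  have hvz0 := hvz.ne
  have hvz0' := hvz'.ne
  have hvw0 : v ≠ w := by rintro rfl; exact P.xw _ hwA hvT
  have hvw0' : v ≠ w' := by rintro rfl; exact Q.xw _ hwB hvS
  obtain ⟨r₁, r₂, hr, hre, hT⟩ := eq_five P.cw hTB' (a := v) (b := z') (c := w') (by
      rw [Finset.disjoint_left]
      intro u hu hu'
      rw [Finset.mem_inter] at hu
      simp only [Finset.mem_insert, Finset.mem_singleton] at hu'
      rcases hu' with rfl | rfl | rfl
      · exact Q.wy _ hvS hu.2
      · exact Q.xy _ hzB hu.2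
      · exact Q.xy _ hwB hu.2) Finset.inter_subset_left hvT (hBT hzB) (hBT hwB) hvz0' hvw0'
      hwz'.symm
  obtain ⟨g₁, g₂, hg, hge, hS⟩ := eq_five Q.cw hAS' (a := v) (b := z) (c := w) (by
      rw [Finset.disjoint_left]
      intro u hu hu'
      rw [Finset.mem_inter] at hu
      simp only [Finset.mem_insert, Finset.mem_singleton] at hu'
      rcases hu' with rfl | rfl | rfl
      · exact P.wy _ hvT hu.1
      · exact P.xy _ hzA hu.1
      · exact P.xy _ hwA hu.1) Finset.inter_subset_right hvS (hAS hzA) (hAS hwA) hvz0 hvw0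
      hwz.symm
  have hr₁ : r₁ ∈ T ∩ B' := by rw [hre]; simp
  have hr₂ : r₂ ∈ T ∩ B' := by rw [hre]; simp
  have hg₁ : g₁ ∈ A' ∩ S := by rw [hge]; simp
  have hg₂ : g₂ ∈ A' ∩ S := by rw [hge]; simp
  rw [Finset.mem_inter] at hr₁ hr₂ hg₁ hg₂
  have hvw : ¬ G.Adj v w := fun h' => hwz (huz w hwA h')
  have hvw' : ¬ G.Adj v w' := fun h' => hwz' (huz' w' hwB h')
  obtain ⟨wz, hw⟩ := C.second hv (hAe ▸ P) hvT hvz hvw (hBT hzB) hvz'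
  obtain ⟨wz', hw'⟩ := C.second hv (hBe ▸ Q) hvS hvz' hvw' (hAS hzA) hvz
  have d1 := fun u h1 h2 => P.xw u h1 h2
  have d2 := fun u h1 h2 => P.wy u h1 h2
  have d3 := fun u h1 h2 => P.xy u h1 h2
  have d4 := fun u h1 h2 => Q.xw u h1 h2
  have d5 := fun u h1 h2 => Q.wy u h1 h2
  have d6 := fun u h1 h2 => Q.xy u h1 h2
  have hzT := hBT hzB
  have hwT := hBT hwB
  have hzS := hAS hzA
  have hwS := hAS hwA
  have nzz : z ≠ z' := by rintro rfl; exact d1 _ hzA hzT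
  have nzw : z ≠ w' := by rintro rfl; exact d1 _ hzA hwT
  have nwz : w ≠ z' := by rintro rfl; exact d1 _ hwA hzT
  have nww : w ≠ w' := by rintro rfl; exact d1 _ hwA hwT
  have nT : ∀ r, r ∈ T → r ∈ B' → v ≠ r ∧ z ≠ r ∧ w ≠ r ∧ z' ≠ r ∧ w' ≠ r ∧ r ≠ g₁ ∧ r ≠ g₂ := by
    intro r h1 h2
    refine ⟨?_, ?_, ?_, ?_, ?_, ?_, ?_⟩ <;> rintro rfl
    · exact d5 _ hvS h2
    · exact d5 _ hzS h2
    · exact d5 _ hwS h2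
    · exact d6 _ hzB h2
    · exact d6 _ hwB h2
    · exact d2 _ h1 hg₁.1
    · exact d2 _ h1 hg₂.1
  have nS : ∀ g, g ∈ A' → g ∈ S → v ≠ g ∧ z ≠ g ∧ w ≠ g ∧ z' ≠ g ∧ w' ≠ g := by
    intro r h2 h1
    refine ⟨?_, ?_, ?_, ?_, ?_⟩ <;> rintro rfl
    · exact d2 _ hvT h2
    · exact d3 _ hzA h2
    · exact d3 _ hwA h2
    · exact d2 _ hzT h2
    · exact d2 _ hwT h2
  obtain ⟨a1, a2, a3, a4, a5, a6, a7⟩ := nT r₁ hr₁.1 hr₁.2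
  obtain ⟨b1, b2, b3, b4, b5, b6, b7⟩ := nT r₂ hr₂.1 hr₂.2
  obtain ⟨c1, c2, c3, c4, c5⟩ := nS g₁ hg₁.1 hg₁.2
  obtain ⟨e1, e2, e3, e4, e5⟩ := nS g₂ hg₂.1 hg₂.2
  refine ⟨z, w, z', w', r₁, r₂, g₁, g₂, A', B', hv, hAe ▸ hT ▸ P, hBe ▸ hS ▸ Q, ?_, hvz, hvz', hvw,
    hvw', wz, hw z' hzT hvz0'.symm, hw w' hwT hvw0'.symm, hw r₁ hr₁.1 a1.symm, hw r₂ hr₂.1 b1.symm,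
    wz', hw' z hzS hvz0.symm, hw' g₁ hg₁.2 c1.symm, hw' g₂ hg₂.2 e1.symm, hg₁.1, hg₂.1, hr₁.2,
    hr₂.2, ?_, ?_, ?_, ?_⟩
  · simp only [List.nodup_cons, List.mem_cons, List.not_mem_nil, or_false, not_or, List.nodup_nil,
      not_false_eq_true, and_true]
    exact ⟨⟨hvz0, hvw0, hvz0', hvw0', a1, b1, c1, e1⟩, ⟨hwz.symm, nzz, nzw, a2, b2, c2, e2⟩,
      ⟨nwz, nww, a3, b3, c3, e3⟩, ⟨hwz'.symm, a4, b4, c4, e4⟩, ⟨a5, b5, c5, e5⟩, ⟨hr, a6, a7⟩,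
      ⟨b6, b7⟩, hg⟩
  · exact fun u hu => (hAe ▸ hT ▸ P).nbr hu
  · exact fun u hu => (hAe ▸ hT ▸ P).nbr' hu hvw
  · exact fun u hu => (hBe ▸ hS ▸ Q).nbr hu
  · exact fun u hu => (hBe ▸ hS ▸ Q).nbr' hu hvw'
end DegreeFourEnd

/-! ### Configurations with nine vertices -/

section Nine
variable [Fintype V] [DecidableEq V] {G : SimpleGraph V}

/-- If `Y` is contained in `{p, q, r}` and any two of these vertices in `Y` would force `X` to be
contained in `{a}`, then `X` or `Y` has fewer than two vertices. -/
lemma pick {X R Y : Finset V} {a p q r : V} (P : FSep G X R Y)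
    (h : ∀ y ∈ Y, y = p ∨ y = q ∨ y = r) (hpq : p ∈ Y → q ∈ Y → ∀ u ∈ X, u = a)
    (hpr : p ∈ Y → r ∈ Y → ∀ u ∈ X, u = a) (hqr : q ∈ Y → r ∈ Y → ∀ u ∈ X, u = a) : False := by
  obtain ⟨u, hu, hne⟩ := Finset.exists_mem_ne P.cx a
  obtain ⟨y₁, hy₁, y₂, hy₂, hy⟩ := Finset.one_lt_card.1 P.cy
  rcases h y₁ hy₁ with rfl | rfl | rfl <;> rcases h y₂ hy₂ with rfl | rfl | rfl
  all_goals first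
    | exact hy rfl
    | exact hne (hpq ‹_› ‹_› u hu)
    | exact hne (hpr ‹_› ‹_› u hu)
    | exact hne (hqr ‹_› ‹_› u hu)

set_option maxHeartbeats 1000000 in
/-- The vertex `v` is not adjacent to both `r₁` and `g₁`. Otherwise the graph has only nine vertices
and enough adjacencies are known to show that a `5`-cut through the edge `zw'` would contain the six
vertices `z`, `w'`, `v`, `w`, `g₂` and `r₂`. -/
lemma Config.nine (C : Critical G) {v z w z' w' r₁ r₂ g₁ g₂ : V} {A' B' : Finset V}
    (K : Config G v z w z' w' r₁ r₂ g₁ g₂ A' B') (hr : G.Adj v r₁) (hg : G.Adj v g₁) : False := by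
  have hn := K.nodup
  simp only [List.nodup_cons, List.mem_cons, List.not_mem_nil, or_false, not_or, List.nodup_nil,
    not_false_eq_true, and_true] at hn
  have hn' := hn
  obtain ⟨⟨n1, n2, n3, n4, n5, n6, n7, n8⟩, ⟨m1, m2, m3, m4, m5, m6, m7⟩,
    ⟨l1, l2, l3, l4, l5, l6⟩, ⟨k1, k2, k3, k4, k5⟩, ⟨j1, j2, j3, j4⟩, ⟨i1, i2, i3⟩, ⟨h1, h2⟩, f1⟩ := hn
  have hN : nb G v = {z, z', r₁, g₁} := by
    refine (Finset.eq_of_subset_of_card_le ?_ ?_).symm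
    · intro u hu
      simp only [Finset.mem_insert, Finset.mem_singleton] at hu
      rw [mem_nb]
      rcases hu with rfl | rfl | rfl | rfl
      exacts [K.vz, K.vz', hr, hg]
    · rw [K.hv, Finset.card_insert_of_notMem, Finset.card_insert_of_notMem, Finset.card_pair i2]
      · simp [k2, k4]
      · simp [m2, m4, m6]
  have nv : ∀ u, G.Adj v u → u = z ∨ u = z' ∨ u = r₁ ∨ u = g₁ := by
    intro u hu
    rw [← mem_nb, hN] at hu
    simpa using hu
  obtain ⟨X, R, Y, R₀, hvR, hgR⟩ := C.edge_self K.hv hg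
  have hA2 := (C.single_nbr K.hv K.P.symm R₀ (by simp) K.g₁A hg (by
    intro u hu hvu
    rcases nv u hvu with rfl | rfl | rfl | rfl
    · exact absurd hu (K.P.xy _ (by simp))
    · exact absurd hu (K.P.wy _ (by simp))
    · exact absurd hu (K.P.wy _ (by simp))
    · rfl) hvR hgR).2.1
  have hA : ({g₁, g₂} : Finset V) = A' := by
    refine Finset.eq_of_subset_of_card_le ?_ (by rw [hA2, Finset.card_pair f1])
    intro u hu
    simp only [Finset.mem_insert, Finset.mem_singleton] at hu
    rcases hu with rfl | rfl
    exacts [K.g₁A, K.g₂A]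
  have hB2 : B'.card = 2 := by
    have e1 := K.P.toVPart.card Finset.univ
    have e2 := K.Q.toVPart.card Finset.univ
    simp only [Finset.univ_inter] at e1 e2
    rw [e1, K.P.cw, hA2, Finset.card_pair m1, K.Q.cw, Finset.card_pair k1] at e2
    omega
  have hB : ({r₁, r₂} : Finset V) = B' := by
    refine Finset.eq_of_subset_of_card_le ?_ (by rw [hB2, Finset.card_pair i1])
    intro u hu
    simp only [Finset.mem_insert, Finset.mem_singleton] at hu
    rcases hu with rfl | rfl
    exacts [K.r₁B, K.r₂B]
  have all : ∀ u, u = v ∨ u = z ∨ u = w ∨ u = z' ∨ u = w' ∨ u = r₁ ∨ u = r₂ ∨ u = g₁ ∨ u = g₂ := by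
    intro u
    have := K.P.cov u
    rw [← hA] at this
    simp only [Finset.mem_insert, Finset.mem_singleton] at this
    tauto
  have hvg₂ : ¬ G.Adj v g₂ := by
    intro h
    rcases nv _ h with h | h | h | h
    exacts [m7 h.symm, k5 h.symm, i3 h.symm, f1 h.symm]
  have hvr₂ : ¬ G.Adj v r₂ := by
    intro h
    rcases nv _ h with h | h | h | h
    exacts [m5 h.symm, k3 h.symm, i1 h.symm, h1 h]
  obtain ⟨gg, hgT⟩ := C.second K.hv (hA ▸ K.P.symm) (by simp) hg hvg₂ (by simp) K.vz'
  obtain ⟨rr, hrS⟩ := C.second K.hv (hB ▸ K.Q.symm) (by simp) hr hvr₂ (by simp) K.vz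
  have q1 : G.Adj g₂ z' := hgT z' (by simp) (Ne.symm n3)
  have q2 : G.Adj g₂ w' := hgT w' (by simp) (Ne.symm n4)
  have q3 : G.Adj g₂ r₁ := hgT r₁ (by simp) (Ne.symm n5)
  have q4 : G.Adj g₂ r₂ := hgT r₂ (by simp) (Ne.symm n6)
  have q5 : G.Adj r₂ z := hrS z (by simp) (Ne.symm n1)
  have q6 : G.Adj r₂ w := hrS w (by simp) (Ne.symm n2)
  have q7 : G.Adj r₂ g₁ := hrS g₁ (by simp) (Ne.symm n7)
  have a1 := K.vz'
  have a2 := K.wz'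
  have a3 := K.wr₁
  have a4 := K.wg₁
  obtain ⟨X, R, Y, P, hzR, hwR⟩ := C.edge_near K.hv K.vz K.vw' K.wz'''.symm
  clear hN nv hA hB hA2 hB2 hgT hrS hvg₂ hvr₂
  -- on a side of the cut, a single known vertex confines the other side to few vertices
  have L : ∀ {X Y : Finset V}, FSep G X R Y →
      (v ∈ X → ∀ y ∈ Y, y = w ∨ y = r₂ ∨ y = g₂) ∧ (w ∈ X → ∀ y ∈ Y, y = v ∨ y = g₁ ∨ y = g₂) ∧
      (r₂ ∈ X → ∀ y ∈ Y, y = v ∨ y = z') ∧ (g₂ ∈ X → ∀ y ∈ Y, y = v ∨ y = w) ∧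
      (g₁ ∈ X → ∀ y ∈ Y, y = w ∨ y = z' ∨ y = r₁) := by
    intro X Y P
    have na : ∀ {a b}, G.Adj a b → a ∈ X → b ∉ Y := fun h h1 h2 => P.na _ h1 _ h2 h
    have xy := P.xy
    have h3 := P.wy _ hzR
    have h4 := P.wy _ hwR
    refine ⟨fun hx y hy => ?_, fun hx y hy => ?_, fun hx y hy => ?_, fun hx y hy => ?_,
      fun hx y hy => ?_⟩
    · have := na a1 hx; have := na hr hx; have := na hg hx; have := xy _ hx
      rcases all y with rfl | rfl | rfl | rfl | rfl | rfl | rfl | rfl | rfl <;>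
        first | contradiction | simp
    · have := na a2 hx; have := na a3 hx; have := na q6.symm hx; have := xy _ hx
      rcases all y with rfl | rfl | rfl | rfl | rfl | rfl | rfl | rfl | rfl <;>
        first | contradiction | simp
    · have := na rr hx; have := na q6 hx; have := na q7 hx; have := na q4.symm hx; have := xy _ hx
      rcases all y with rfl | rfl | rfl | rfl | rfl | rfl | rfl | rfl | rfl <;>
        first | contradiction | simp
    · have := na gg hx; have := na q1 hx; have := na q3 hx; have := na q4 hx; have := xy _ hx
      rcases all y with rfl | rfl | rfl | rfl | rfl | rfl | rfl | rfl | rfl <;>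
        first | contradiction | simp
    · have := na hg.symm hx; have := na gg.symm hx; have := na q7.symm hx; have := xy _ hx
      rcases all y with rfl | rfl | rfl | rfl | rfl | rfl | rfl | rfl | rfl <;>
        first | contradiction | simp
  have aux : ∀ {X Y : Finset V}, FSep G X R Y → v ∉ X ∧ w ∉ X ∧ g₂ ∉ X := by
    intro X Y P
    obtain ⟨lv, lw, lr, lg, lg'⟩ := L P
    obtain ⟨lv', lw', lr', lg₂', lg₁'⟩ := L P.symm
    refine ⟨fun hx => pick (a := v) P (lv hx) ?_ ?_ ?_, fun hx => pick (a := w) P (lw hx) ?_ ?_ ?_,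
      fun hx => ?_⟩
    · intro hp hq u hu
      have e1 := lw' hp u hu
      have e2 := lr' hq u hu
      clear * - e1 e2 hn'
      grind
    · intro hp hq u hu
      have e1 := lw' hp u hu
      have e2 := lg₂' hq u hu
      clear * - e1 e2 hn'
      grind
    · intro hp hq u hu
      have e1 := lr' hp u hu
      have e2 := lg₂' hq u hu
      clear * - e1 e2 hn'
      grind
    · intro hp hq u hu
      have e1 := lv' hp u hu
      have e2 := lg₁' hq u hu
      clear * - e1 e2 hn'
      grind
    · intro hp hq u hu
      have e1 := lv' hp u hu
      have e2 := lg₂' hq u hu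
      clear * - e1 e2 hn'
      grind
    · intro hp hq u hu
      have e1 := lg₁' hp u hu
      have e2 := lg₂' hq u hu
      clear * - e1 e2 hn'
      grind
    · obtain ⟨y₁, hy₁, hne₁⟩ := Finset.exists_mem_ne P.cy v
      obtain ⟨y₂, hy₂, hne₂⟩ := Finset.exists_mem_ne P.cy w
      have hwY : w ∈ Y := (lg hx _ hy₁).resolve_left hne₁ ▸ hy₁
      have hvY : v ∈ Y := (lg hx _ hy₂).resolve_right hne₂ ▸ hy₂
      obtain ⟨u, hu, hne⟩ := Finset.exists_mem_ne P.cx g₂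
      have e1 := lv' hvY u hu
      have e2 := lw' hwY u hu
      clear * - e1 e2 hne hn'
      grind
  have aux' : ∀ {X Y : Finset V}, FSep G X R Y → r₂ ∉ X := by
    intro X Y P hx
    have hv := (aux P.symm).1
    obtain ⟨u, hu, hne⟩ := Finset.exists_mem_ne P.cy z'
    rcases (L P).2.2.1 hx u hu with rfl | h
    exacts [hv hu, hne h]
  have inR : ∀ u, u ∉ X → u ∉ Y → u ∈ R := fun u hx hy => by have := P.cov u; tauto
  have hsub : ({z, w', v, w, g₂, r₂} : Finset V) ⊆ R := by
    intro u hu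
    simp only [Finset.mem_insert, Finset.mem_singleton] at hu
    obtain ⟨x1, x2, x3⟩ := aux P
    obtain ⟨y1, y2, y3⟩ := aux P.symm
    rcases hu with rfl | rfl | rfl | rfl | rfl | rfl
    exacts [hzR, hwR, inR _ x1 y1, inR _ x2 y2, inR _ x3 y3, inR _ (aux' P) (aux' P.symm)]
  have hc := Finset.card_le_card hsub
  rw [P.cw] at hc
  rw [Finset.card_insert_of_notMem, Finset.card_insert_of_notMem, Finset.card_insert_of_notMem,
    Finset.card_insert_of_notMem, Finset.card_pair (Ne.symm h2)] at hc
  · omega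
  all_goals
    clear * - hn'
    simp only [Finset.mem_insert, Finset.mem_singleton]
    grind
end Nine

/-! ### There is no vertex of degree four -/

section NotNine
variable [Fintype V] [DecidableEq V] {G : SimpleGraph V}

/-- The vertex `v` sees nothing of `r₁`. Otherwise its fourth neighbour `x` is the only one in `A'`,
so `A'` has two vertices, hence `A' = {g₁, g₂}`, which is the situation of `Config.nine`. -/
lemma Config.not_adj_r (C : Critical G) {v z w z' w' r₁ r₂ g₁ g₂ : V} {A' B' : Finset V}
    (K : Config G v z w z' w' r₁ r₂ g₁ g₂ A' B') : ¬ G.Adj v r₁ := by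
  intro hr
  obtain ⟨-, x, hxA, hvx⟩ := C.full K.P (u := v) (by simp)
  have hn := K.nodup
  simp only [List.nodup_cons, List.mem_cons, List.not_mem_nil, or_false, not_or, List.nodup_nil,
    not_false_eq_true, and_true] at hn
  have hx1 : x ∉ ({z, w} : Finset V) := fun h => K.P.xy x h hxA
  have hx2 : x ∉ ({v, z', w', r₁, r₂} : Finset V) := fun h => K.P.wy x h hxA
  simp only [Finset.mem_insert, Finset.mem_singleton, not_or] at hx1 hx2
  have hN : nb G v = {z, z', r₁, x} := by
    refine (Finset.eq_of_subset_of_card_le ?_ ?_).symm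
    · intro u hu
      simp only [Finset.mem_insert, Finset.mem_singleton] at hu
      rw [mem_nb]
      rcases hu with rfl | rfl | rfl | rfl
      exacts [K.vz, K.vz', hr, hvx]
    · rw [K.hv, Finset.card_insert_of_notMem, Finset.card_insert_of_notMem, Finset.card_pair]
      all_goals
        clear * - hn hx1 hx2
        try simp only [Finset.mem_insert, Finset.mem_singleton]
        grind
  obtain ⟨X, R, Y, R₀, hvR, hxR⟩ := C.edge_self K.hv hvx
  have hA2 := (C.single_nbr K.hv K.P.symm R₀ (by simp) hxA hvx (by
    intro u hu hvu
    rw [← mem_nb, hN] at hvu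
    simp only [Finset.mem_insert, Finset.mem_singleton] at hvu
    rcases hvu with rfl | rfl | rfl | rfl
    · exact absurd hu (K.P.xy _ (by simp))
    · exact absurd hu (K.P.wy _ (by simp))
    · exact absurd hu (K.P.wy _ (by simp))
    · rfl) hvR hxR).2.1
  have hA : ({g₁, g₂} : Finset V) = A' := by
    refine Finset.eq_of_subset_of_card_le ?_ (by
      rw [hA2, Finset.card_pair]; clear * - hn; grind)
    intro u hu
    simp only [Finset.mem_insert, Finset.mem_singleton] at hu
    rcases hu with rfl | rfl
    exacts [K.g₁A, K.g₂A]
  rw [← hA, Finset.mem_insert, Finset.mem_singleton] at hxA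
  rcases hxA with rfl | rfl
  · exact K.nine C hr hvx
  · exact K.swap.flip.swap.nine C hr hvx

set_option maxHeartbeats 2000000 in
/-- If `z` is adjacent to `r₁`, then it is adjacent to `r₂`, and `z`, `w` and `r₁` lie in a
nontrivial `5`-cut with a side `{r₂, d}`, where `d` has degree four. The cut is any one through the
edge `zr₁`; exchanges of cut vertices produce vertices of degree four, and all positions of the
known vertices except the stated one put such a vertex too close to `v`. -/
lemma Config.side_pair (C : Critical G) {v z w z' w' r₁ r₂ g₁ g₂ : V} {A' B' : Finset V}
    (K : Config G v z w z' w' r₁ r₂ g₁ g₂ A' B') (hzr : G.Adj z r₁) :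
    ∃ d R Y, FSep G {r₂, d} R Y ∧ r₂ ≠ d ∧ G.Adj z r₂ ∧ z ∈ R ∧ w ∈ R ∧ r₁ ∈ R ∧
      (nb G d).card = 4 ∧ nb G d = insert r₂ (R \ {z, w}) := by
  have hv := K.hv
  have vr₁ := K.not_adj_r C
  have vr₂ := K.flip.not_adj_r C
  have vg₁ := K.swap.not_adj_r C
  have vg₂ := K.swap.flip.not_adj_r C
  have hn := K.nodup
  simp only [List.nodup_cons, List.mem_cons, List.not_mem_nil, or_false, not_or, List.nodup_nil,
    not_false_eq_true, and_true] at hn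
  obtain ⟨⟨n1, n2, n3, n4, n5, n6, n7, n8⟩, ⟨m1, m2, m3, m4, m5, m6, m7⟩,
    ⟨l1, l2, l3, l4, l5, l6⟩, ⟨k1, k2, k3, k4, k5⟩, ⟨j1, j2, j3, j4⟩, ⟨i1, i2, i3⟩, ⟨h1, h2⟩, f1⟩ := hn
  obtain ⟨X, R, Y, P, hzR, hrR⟩ := C.edge_near hv K.vz vr₁ hzr
  have cov : ∀ {X Y : Finset V}, FSep G X R Y → ∀ u, u ∉ X → u ∉ Y → u ∈ R := by
    intro X Y P u h1 h2; have := P.cov u; tauto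
  -- neither side of the cut contains `w`
  have hw : ∀ {X Y : Finset V}, FSep G X R Y → w ∉ X := by
    intro X Y P hwX
    have na : ∀ {a}, G.Adj w a → a ∉ Y := fun h h' => P.na _ hwX _ h' h
    have hz'Y := na K.wz'
    have hw'Y := na K.ww'
    have hr₁Y := na K.wr₁
    have hr₂Y := na K.wr₂
    have hwY := P.xy _ hwX
    have hvY : v ∈ Y := by
      obtain ⟨-, y, hy, hzy⟩ := C.full P hzR
      rcases K.nz y hzy with rfl | rfl | rfl | rfl | rfl | rfl
      · exact absurd hy hwY
      · exact hy
      all_goals contradiction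
    have hz'R : z' ∈ R := cov P _ (fun h => P.na _ h _ hvY K.vz'.symm) hz'Y
    have hz'Y := P.wy _ hz'R
    have hzY := P.wy _ hzR
    have zY : ∀ y ∈ Y, G.Adj z y → y = v := by
      intro y hy hzy
      rcases K.nz y hzy with rfl | rfl | rfl | rfl | rfl | rfl
      · exact absurd hy hwY
      · rfl
      all_goals contradiction
    by_cases hw'X : w' ∈ X
    · have hg₁Y : g₁ ∉ Y := fun h => P.na _ hw'X _ h K.wg₁
      have hg₂Y : g₂ ∉ Y := fun h => P.na _ hw'X _ h K.wg₂
      obtain ⟨y, hy, hyv⟩ := Finset.exists_mem_ne P.cy v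
      obtain ⟨d, -, hd, hdn⟩ := C.exchange_cut P.symm {v} {z, z'} (by simpa using hvY)
        (by simp [Finset.insert_subset_iff, hzR, hz'R]) (by rw [Finset.card_pair m2]; simp)
        (by
          intro u hu y hy hyv huy
          rw [Finset.mem_singleton] at hyv
          simp only [Finset.mem_insert, Finset.mem_singleton] at hu
          rcases hu with rfl | rfl
          · exact hyv (zY y hy huy)
          · rcases K.nz' y huy with rfl | rfl | rfl | rfl | rfl | rfl <;> contradiction)
        ⟨y, by simp [hy, hyv]⟩
      refine C.not_adj hv hd ?_
      rw [← mem_nb, hdn]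
      simp [n1, n3]
    · have hw'R : w' ∈ R := cov P _ hw'X hw'Y
      by_cases hgg : g₁ ∈ Y ∧ g₂ ∈ Y
      · have hg₁X := P.symm.xy _ hgg.1
        have hg₂X := P.symm.xy _ hgg.2
        have hvX := P.symm.xy _ hvY
        have hzX := P.symm.wy _ hzR
        have hz'X := P.symm.wy _ hz'R
        obtain ⟨x, hx, hxw⟩ := Finset.exists_mem_ne P.cx w
        obtain ⟨d, hdX, hd, hdn⟩ := C.exchange_cut P {w} {z', w'} (by simpa using hwX)
          (by simp [Finset.insert_subset_iff, hw'R, hz'R]) (by rw [Finset.card_pair k1]; simp)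
          (by
            intro u hu y hy hyv huy
            rw [Finset.mem_singleton] at hyv
            simp only [Finset.mem_insert, Finset.mem_singleton] at hu
            rcases hu with rfl | rfl
            · rcases K.nz' y huy with rfl | rfl | rfl | rfl | rfl | rfl <;> contradiction
            · rcases K.nw' y huy with rfl | rfl | rfl | rfl | rfl <;> contradiction)
          ⟨x, by simp [hx, hxw]⟩
        have hdv : d = v := C.near hv hd K.vz (by
          rw [← mem_nb, hdn]
          simp [hzR, m2, m3])
        have : d ∈ X \ {w} := by rw [hdX]; simp
        rw [hdv] at this
        exact hvX (Finset.mem_sdiff.1 this).1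
      · have hMc : (Y ∩ {v, g₁, g₂}).card ≤ 2 := by
          have : Y ∩ {v, g₁, g₂} ⊆ {v, g₁} ∨ Y ∩ {v, g₁, g₂} ⊆ {v, g₂} := by
            by_cases hg : g₁ ∈ Y
            · left
              intro u hu
              simp only [Finset.mem_inter, Finset.mem_insert, Finset.mem_singleton] at hu ⊢
              rcases hu with ⟨h, rfl | rfl | rfl⟩ <;> tauto
            · right
              intro u hu
              simp only [Finset.mem_inter, Finset.mem_insert, Finset.mem_singleton] at hu ⊢
              rcases hu with ⟨h, rfl | rfl | rfl⟩ <;> tauto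
          rcases this with h | h
          · exact (Finset.card_le_card h).trans Finset.card_le_two
          · exact (Finset.card_le_card h).trans Finset.card_le_two
        by_cases hne : (Y \ (Y ∩ {v, g₁, g₂})).Nonempty
        · obtain ⟨d, -, hd, hdn⟩ := C.exchange_cut P.symm (Y ∩ {v, g₁, g₂}) {z, z', w'}
            Finset.inter_subset_left
            (by simp [Finset.insert_subset_iff, hzR, hz'R, hw'R])
            (by rw [Finset.card_eq_three.2 ⟨z, z', w', m2, m3, k1, rfl⟩]; omega)
            (by
              intro u hu y hy hyM huy
              simp only [Finset.mem_inter, Finset.mem_insert, Finset.mem_singleton, not_and,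
                not_or] at hyM
              obtain ⟨e1, e2, e3⟩ := hyM hy
              simp only [Finset.mem_insert, Finset.mem_singleton] at hu
              rcases hu with rfl | rfl | rfl
              · exact e1 (zY y hy huy)
              · have := P.wy _ hw'R
                rcases K.nz' y huy with rfl | rfl | rfl | rfl | rfl | rfl <;> contradiction
              · rcases K.nw' y huy with rfl | rfl | rfl | rfl | rfl <;> contradiction) hne
          refine C.not_adj hv hd ?_
          rw [← mem_nb, hdn]
          simp [n1, n3, n4, hvY]
        ·
          -- here `Y ⊆ {v, g₁, g₂}`, so all four neighbours of `v` would lie in the cut, together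
          -- with `w'` and `r₁`
          have hY : ∀ y ∈ Y, y = v ∨ y = g₁ ∨ y = g₂ := by
            intro y hy
            by_contra hcon
            exact hne ⟨y, by simpa [hy] using hcon⟩
          have hsub : insert w' (insert r₁ (nb G v)) ⊆ R := by
            intro u hu
            simp only [Finset.mem_insert, mem_nb] at hu
            rcases hu with rfl | rfl | hu
            · exact hw'R
            · exact hrR
            · refine cov P _ (fun h => P.na _ h _ hvY hu.symm) (fun h => ?_)
              rcases hY u h with rfl | rfl | rfl
              exacts [hu.ne rfl, vg₁ hu, vg₂ hu]
          have hc := Finset.card_le_card hsub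
          rw [P.cw, Finset.card_insert_of_notMem, Finset.card_insert_of_notMem, hv] at hc
          · omega
          · rwa [mem_nb]
          · rw [Finset.mem_insert, mem_nb, not_or]
            exact ⟨j1, K.vw'⟩
  have hwR : w ∈ R := cov P _ (hw P) (hw P.symm)
  have hvR : v ∉ R := by
    intro hvR
    have h := (C.single_nbr hv K.P P (by simp) (by simp) K.vz (by
      intro u hu hvu
      simp only [Finset.mem_insert, Finset.mem_singleton] at hu
      rcases hu with rfl | rfl
      · rfl
      · exact absurd hvu K.vw) hvR hzR).2.2.1
    exact n5 (Finset.card_le_one.1 h.le v (by simp [hvR]) r₁ (by simp [hrR]))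
  have hnR : ∀ {X Y : Finset V}, FSep G X R Y → ∃ y ∈ Y, y = z' ∨ y = w' ∨ y = r₂ := by
    intro X Y P
    obtain ⟨-, y, hy, hwy⟩ := C.full P hwR
    refine ⟨y, hy, ?_⟩
    have := P.wy _ hzR
    have := P.wy _ hrR
    rcases K.nw y hwy with rfl | rfl | rfl | rfl | rfl <;> first | contradiction | simp
  have main : ∀ {X Y : Finset V}, FSep G X R Y → r₂ ∈ X →
      ∃ d R Y, FSep G {r₂, d} R Y ∧ r₂ ≠ d ∧ G.Adj z r₂ ∧ z ∈ R ∧ w ∈ R ∧ r₁ ∈ R ∧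
        (nb G d).card = 4 ∧ nb G d = insert r₂ (R \ {z, w}) := by
    intro X Y P hrX
    have hrY := P.xy _ hrX
    have hzw' : z' ∉ X ∧ w' ∉ X := by
      obtain ⟨y, hy, rfl | rfl | rfl⟩ := hnR P
      · exact ⟨fun h => P.xy _ h hy, fun h => P.na _ h _ hy K.wz''⟩
      · exact ⟨fun h => P.na _ h _ hy K.wz''.symm, fun h => P.xy _ h hy⟩
      · contradiction
    obtain ⟨hz'X, hw'X⟩ := hzw'
    have hrR' := P.wy _ hrR
    have hwR' := P.wy _ hwR
    have hzR' := P.wy _ hzR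
    have hrR'' := P.symm.wy _ hrR
    have hwR'' := P.symm.wy _ hwR
    have hzR'' := P.symm.wy _ hzR
    rcases P.cov v with hvX | hvR' | hvY
    · exfalso
      have hvY := P.xy _ hvX
      have hz'Y : z' ∉ Y := fun h => P.na _ hvX _ h K.vz'
      have hz'R := cov P _ hz'X hz'Y
      have hw'Y : w' ∈ Y := by
        obtain ⟨y, hy, rfl | rfl | rfl⟩ := hnR P
        · contradiction
        · exact hy
        · contradiction
      obtain ⟨y, hy, hyw⟩ := Finset.exists_mem_ne P.cy w'
      obtain ⟨d, hdY, hd, hdn⟩ := C.exchange_cut P.symm {w'} {z, w} (by simpa using hw'Y)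
        (by simp [Finset.insert_subset_iff, hzR, hwR]) (by rw [Finset.card_pair m1]; simp)
        (by
          intro u hu y hy hyv huy
          rw [Finset.mem_singleton] at hyv
          simp only [Finset.mem_insert, Finset.mem_singleton] at hu
          rcases hu with rfl | rfl
          · rcases K.nz y huy with rfl | rfl | rfl | rfl | rfl | rfl <;> contradiction
          · rcases K.nw y huy with rfl | rfl | rfl | rfl | rfl <;> contradiction)
        ⟨y, by simp [hy, hyw]⟩
      have hdv : d = v := C.near hv hd K.vz' (by
        rw [← mem_nb, hdn]
        simp [hz'R, Ne.symm m2, Ne.symm l1])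
      have : d ∈ Y \ {w'} := by rw [hdY]; simp
      rw [hdv] at this
      exact hvY (Finset.mem_sdiff.1 this).1
    · contradiction
    · have hvX := P.symm.xy _ hvY
      obtain ⟨x, hx, hxr⟩ := Finset.exists_mem_ne P.cx r₂
      have zX : ∀ x ∈ X, G.Adj z x → x = r₂ := by
        intro x hx hzx
        rcases K.nz x hzx with rfl | rfl | rfl | rfl | rfl | rfl <;> first | contradiction | rfl
      obtain ⟨d, hdX, hd, hdn⟩ := C.exchange_cut P {r₂} {z, w} (by simpa using hrX)
        (by simp [Finset.insert_subset_iff, hzR, hwR]) (by rw [Finset.card_pair m1]; simp)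
        (by
          intro u hu y hy hyv huy
          rw [Finset.mem_singleton] at hyv
          simp only [Finset.mem_insert, Finset.mem_singleton] at hu
          rcases hu with rfl | rfl
          · exact hyv (zX y hy huy)
          · rcases K.nw y huy with rfl | rfl | rfl | rfl | rfl <;> contradiction)
        ⟨x, by simp [hx, hxr]⟩
      have hd' : d ∈ X \ {r₂} := by rw [hdX]; simp
      have hX : X = {r₂, d} := by
        rw [Finset.insert_eq, ← hdX, Finset.union_sdiff_of_subset (by simpa using hrX)]
      obtain ⟨⟨x, hx, hzx⟩, -⟩ := C.full P hzR
      refine ⟨d, R, Y, hX ▸ P, ?_, zX x hx hzx ▸ hzx, hzR, hwR, hrR, hd, ?_⟩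
      · rintro rfl; simp at hd'
      · rw [hdn]
        ext u
        simp only [Finset.mem_sdiff, Finset.mem_union, Finset.mem_insert, Finset.mem_singleton]
        constructor
        · tauto
        · rintro (rfl | h)
          · exact ⟨Or.inr rfl, by rintro (h | h); exacts [m5 h.symm, l4 h.symm]⟩
          · tauto
  rcases P.cov r₂ with h | h | h
  · exact main P h
  · exfalso
    obtain ⟨y, hy, hy'⟩ := hnR P
    obtain ⟨x, hx, hx'⟩ := hnR P.symm
    rcases hy' with rfl | rfl | rfl
    · rcases hx' with rfl | rfl | rfl
      · exact P.xy _ hx hy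
      · exact P.na _ hx _ hy K.wz''
      · exact P.xw _ hx h
    · rcases hx' with rfl | rfl | rfl
      · exact P.na _ hx _ hy K.wz''.symm
      · exact P.xy _ hx hy
      · exact P.xw _ hx h
    · exact P.wy _ h hy
  · exact main P.symm h

/-- The vertex `z` is not adjacent to `r₁`. Otherwise `Config.side_pair`, applied to `r₁` and to `r₂`,
gives two cuts with the same vertex `d` of degree four; one of the corners of these cuts is
cut off by four vertices and leaves both `r₂` and `d` on the other side. -/
lemma Config.false (C : Critical G) {v z w z' w' r₁ r₂ g₁ g₂ : V} {A' B' : Finset V}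
    (K : Config G v z w z' w' r₁ r₂ g₁ g₂ A' B') (hzr : G.Adj z r₁) : False := by
  have hn := K.nodup
  simp only [List.nodup_cons, List.mem_cons, List.not_mem_nil, or_false, not_or, List.nodup_nil,
    not_false_eq_true, and_true] at hn
  obtain ⟨⟨n1, n2, n3, n4, n5, n6, n7, n8⟩, ⟨m1, m2, m3, m4, m5, m6, m7⟩,
    ⟨l1, l2, l3, l4, l5, l6⟩, ⟨k1, k2, k3, k4, k5⟩, ⟨j1, j2, j3, j4⟩, ⟨i1, i2, i3⟩, ⟨h1, h2⟩, f1⟩ := hn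
  obtain ⟨d, S, Y, P, hd, hzr₂, hzS, hwS, hrS, hd4, hdn⟩ := K.side_pair C hzr
  obtain ⟨d', S', Y', P', hd', -, hzS', hwS', hrS', hd4', hdn'⟩ := K.flip.side_pair C hzr₂
  have e1 : G.Adj d r₁ := by
    rw [← mem_nb, hdn]; simp [hrS, Ne.symm m4, Ne.symm l3]
  have e2 : G.Adj d' r₁ := by
    rw [← mem_nb, hdn']; simp
  obtain rfl := C.near hd4 hd4' e1 e2
  have hmem : ∀ u, u ≠ z → u ≠ w → u ≠ r₁ → u ≠ r₂ → (u ∈ S ↔ u ∈ S') := by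
    intro u a1 a2 a3 a4
    have : u ∈ nb G d' ↔ u ∈ nb G d' := Iff.rfl
    conv at this => lhs; rw [hdn]
    conv at this => rhs; rw [hdn']
    simpa [a1, a2, a3, a4] using this
  have key : ∀ u ∈ Y, u ∈ Y' := by
    intro u hu
    have a1 : u ≠ z := by rintro rfl; exact P.wy _ hzS hu
    have a2 : u ≠ w := by rintro rfl; exact P.wy _ hwS hu
    have a3 : u ≠ r₁ := by rintro rfl; exact P.wy _ hrS hu
    have a4 : u ≠ r₂ := by rintro rfl; exact P.xy _ (by simp) hu
    have a5 : u ≠ d' := by rintro rfl; exact P.xy _ (by simp) hu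
    rcases P'.cov u with h | h | h
    · simp only [Finset.mem_insert, Finset.mem_singleton] at h
      tauto
    · exact absurd hu (P.wy _ ((hmem u a1 a2 a3 a4).2 h))
    · exact h
  have hYY : Y ⊆ Y ∩ Y' := fun u hu => Finset.mem_inter.2 ⟨hu, key u hu⟩
  have Q := P.symm.toVPart.corner P'.symm.toVPart
  have hcut : S ∩ Y' ∪ S ∩ S' ∪ Y ∩ S' ⊆ S.erase r₁ := by
    intro u hu
    simp only [Finset.mem_union, Finset.mem_inter] at hu
    rw [Finset.mem_erase]
    rcases hu with (⟨a, b⟩ | ⟨a, b⟩) | ⟨a, b⟩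
    · exact ⟨by rintro rfl; exact P'.xy _ (by simp) b, a⟩
    · exact ⟨by rintro rfl; exact P'.xw _ (by simp) b, a⟩
    · exact absurd b (fun b => P'.symm.xw _ (key u a) b)
  have hc := Finset.card_le_card hcut
  rw [Finset.card_erase_of_mem hrS, P.cw] at hc
  obtain ⟨e, he, -⟩ := small_cut C.quasi Q.symm ⟨r₂, by simp⟩
    (P.cy.trans (Finset.card_le_card hYY)) hc
  have f1 : r₂ ∈ ({e} : Finset V) := by rw [← he]; simp
  have f2 : d' ∈ ({e} : Finset V) := by rw [← he]; simp
  rw [Finset.mem_singleton] at f1 f2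
  exact hd (f1.trans f2.symm)

/-- There is no vertex of degree four: in a configuration the neighbours of `z` would be among `w`,
`v`, `z'`, `w'`, so that `z` would be a vertex of degree four adjacent to `v`. -/
lemma Critical.no_four (C : Critical G) (v : V) : (nb G v).card ≠ 4 := by
  intro hv
  obtain ⟨z, w, z', w', r₁, r₂, g₁, g₂, A', B', K⟩ := C.config hv
  by_cases h1 : G.Adj z r₁
  · exact K.false C h1
  by_cases h2 : G.Adj z r₂
  · exact K.flip.false C h2
  have hsub : nb G z ⊆ {w, v, z', w'} := by
    intro u hu
    rw [mem_nb] at hu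
    rcases K.nz u hu with rfl | rfl | rfl | rfl | rfl | rfl <;> first | contradiction | simp
  have h4 := (Finset.card_le_card hsub).trans Finset.card_le_four
  exact C.not_adj hv (le_antisymm h4 (C.deg z)) K.vz.symm
end NotNine

/-- A quasi 5-connected graph with degree sum at least 9 for all
pairs at distance one or two contains a quasi 5-contractible edge. -/
theorem stmt1 {V : Type*} [Fintype V] [DecidableEq V] (G : SimpleGraph V)
    (hG : QuasiFiveConnected G) (hdeg : DegSumNine G) :
    ∃ x y : V, G.Adj x y ∧ QuasiFiveConnected (contractE G x y) := by
  by_contra hno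
  have C := critical_of_not hG hdeg hno
  obtain ⟨v⟩ : Nonempty V := Fintype.card_pos_iff.1 (by have := hG.1.1; omega)
  obtain ⟨x, hx⟩ := Finset.card_pos.1 (lt_of_lt_of_le (by norm_num) (C.deg v))
  exact (noFour_of_critical C C.no_four).false (mem_nb.1 hx)
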